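/- arXiv:2212.05152 — 2 statements merged into one kernel-verified Lean document; each statement's English description precedes it below -/
import Mathlib

section
/- Let X and Y be compact metric spaces and let c : X × P(Y) → (−∞,+∞] be bounded below and lower semicontinuous, with σ ↦ c(x,σ) proper and convex for each x ∈ X. For μ ∈ P(X), ν ∈ P(Y), let V_c(μ,ν) := inf{ ∫_X c(x,π_x) dμ(x) : π a coupling of μ and ν with disintegration (π_x) }. Let Λ(μ,ν) be the set of probability measures P on X × P(Y) whose first marginal is μ and whose second marginal Q ∈ P(P(Y)) has barycenter ν, i.e. ∫_{P(Y)} (∫_Y g dp) dQ(p) = ∫_Y g dν for all g ∈ C(Y). Then V_c(μ,ν) = inf{ ∫_{X×P(Y)} c(x,p) dP(x,p) : P ∈ Λ(μ,ν) }. -/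
open MeasureTheory Topology Filter Set
open scoped ENNReal NNReal

noncomputable section

/-- The positive part of an extended real number, as an element of `ℝ≥0∞`. -/
def epos (a : EReal) : ℝ≥0∞ := if a = ⊤ then ⊤ else ENNReal.ofReal a.toReal

/-- Signed integral of an `EReal`-valued function (the natural value when `f` is
bounded above or bounded below). -/
def eint {α : Type*} [MeasurableSpace α] (μ : Measure α) (f : α → EReal) : EReal :=
  ((∫⁻ x, epos (f x) ∂μ : ℝ≥0∞) : EReal) - ((∫⁻ x, epos (-(f x)) ∂μ : ℝ≥0∞) : EReal)

/-- The Dirac measure at a point, as a probability measure. -/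
def diracP {α : Type*} [MeasurableSpace α] (x : α) : ProbabilityMeasure α :=
  ⟨Measure.dirac x, inferInstance⟩

/-- `π` is a coupling (transport plan) of `μ` and `ν`. -/
def IsCoupling {X Y : Type*} [MeasurableSpace X] [MeasurableSpace Y]
    (π : ProbabilityMeasure (X × Y)) (μ : ProbabilityMeasure X)
    (ν : ProbabilityMeasure Y) : Prop :=
  (π : Measure (X × Y)).map Prod.fst = (μ : Measure X) ∧
  (π : Measure (X × Y)).map Prod.snd = (ν : Measure Y)

/-- `κ` is a disintegration of the plan `π` with respect to `μ`. -/
def IsDisintegration {X Y : Type*} [MeasurableSpace X] [MeasurableSpace Y]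
    (π : ProbabilityMeasure (X × Y)) (μ : ProbabilityMeasure X)
    (κ : X → ProbabilityMeasure Y) : Prop :=
  Measurable (fun x => (κ x : Measure Y)) ∧
  ∀ (A : Set X) (B : Set Y), MeasurableSet A → MeasurableSet B →
    (π : Measure (X × Y)) (A ×ˢ B) = ∫⁻ x in A, (κ x : Measure Y) B ∂(μ : Measure X)

/-- The cost `π ↦ ∫_X c(x, π_x) dμ(x)` of a transport plan, computed through its
(essentially unique) disintegration with respect to `μ`. -/
def planCost {X Y : Type*} [MeasurableSpace X] [MeasurableSpace Y]
    (μ : ProbabilityMeasure X) (c : X → ProbabilityMeasure Y → EReal)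
    (π : ProbabilityMeasure (X × Y)) : EReal :=
  ⨅ κ ∈ {κ : X → ProbabilityMeasure Y | IsDisintegration π μ κ},
    eint (μ : Measure X) (fun x => c x (κ x))

/-- The optimal weak transport cost `V_c(μ,ν)`. -/
def weakTransport {X Y : Type*} [MeasurableSpace X] [MeasurableSpace Y]
    (c : X → ProbabilityMeasure Y → EReal)
    (μ : ProbabilityMeasure X) (ν : ProbabilityMeasure Y) : EReal :=
  ⨅ π ∈ {π : ProbabilityMeasure (X × Y) | IsCoupling π μ ν}, planCost μ c π

/-- The Borel σ-algebra of the weak* topology on probability measures. -/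
instance probMeasurableSpace {Z : Type*} [MeasurableSpace Z] [TopologicalSpace Z]
    [OpensMeasurableSpace Z] : MeasurableSpace (ProbabilityMeasure Z) := borel _

lemma integrable_continuousMap {Z : Type*} [TopologicalSpace Z] [CompactSpace Z]
    [MeasurableSpace Z] [OpensMeasurableSpace Z] (μ : Measure Z) [IsFiniteMeasure μ] (g : C(Z, ℝ)) :
    Integrable g μ :=
  (BoundedContinuousFunction.mkOfCompact g).integrable μ

section ProbabilityMeasureSpace

variable {Y : Type*} [MetricSpace Y] [CompactSpace Y] [MeasurableSpace Y] [BorelSpace Y]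

instance borelSpace_probabilityMeasure : BorelSpace (ProbabilityMeasure Y) := ⟨rfl⟩

/-- The integrals of a probability measure against a dense sequence of continuous functions. -/
def denseIntegrals (p : ProbabilityMeasure Y) (n : ℕ) : ℝ :=
  ∫ y, TopologicalSpace.denseSeq C(Y, ℝ) n y ∂(p : Measure Y)

lemma continuous_integral_continuousMap_right (μ : Measure Y) [IsFiniteMeasure μ] :
    Continuous fun g : C(Y, ℝ) => ∫ y, g y ∂μ := by
  refine (LipschitzWith.of_dist_le_mul (K := (μ univ).toNNReal) fun f g => ?_).continuous
  rw [dist_eq_norm, ← integral_sub (integrable_continuousMap μ f) (integrable_continuousMap μ g),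
    mul_comm]
  refine norm_integral_le_of_norm_le_const (ae_of_all _ fun y => ?_)
  rw [← dist_eq_norm]
  exact ContinuousMap.dist_apply_le_dist y

omit [CompactSpace Y] in
lemma measure_eq_of_forall_integral_eq {μ ν : Measure Y} [IsFiniteMeasure μ] [IsFiniteMeasure ν]
    (h : ∀ g : C(Y, ℝ), ∫ y, g y ∂μ = ∫ y, g y ∂ν) : μ = ν :=
  ext_of_forall_integral_eq_of_IsFiniteMeasure fun f => h f.toContinuousMap

lemma isClosedEmbedding_denseIntegrals :
    IsClosedEmbedding (denseIntegrals : ProbabilityMeasure Y → ℕ → ℝ) := by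
  refine Continuous.isClosedEmbedding ?_ ?_
  · exact continuous_pi fun n => ProbabilityMeasure.continuous_integral_continuousMap _
  · intro p q hpq
    refine ProbabilityMeasure.toMeasure_injective (measure_eq_of_forall_integral_eq fun g => ?_)
    refine congrFun ((TopologicalSpace.denseRange_denseSeq C(Y, ℝ)).equalizer
      (continuous_integral_continuousMap_right (p : Measure Y))
      (continuous_integral_continuousMap_right (q : Measure Y)) (funext fun n => ?_)) g
    exact congrFun hpq n

instance polishSpace_probabilityMeasure : PolishSpace (ProbabilityMeasure Y) :=
  isClosedEmbedding_denseIntegrals.polishSpace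

omit [CompactSpace Y] in
lemma measurable_probabilityMeasure_toMeasure :
    Measurable fun p : ProbabilityMeasure Y => (p : Measure Y) := by
  refine Measurable.measure_of_isPiSystem_of_isProbabilityMeasure
    (S := {s : Set Y | IsOpen s}) (BorelSpace.measurable_eq.trans rfl) isPiSystem_isOpen ?_
  intro s hs
  refine LowerSemicontinuous.measurable ?_
  rw [lowerSemicontinuous_iff_le_liminf]
  exact fun p => ProbabilityMeasure.le_liminf_measure_open_of_tendsto tendsto_id hs

lemma measurable_probabilityMeasure_iff {X : Type*} [MeasurableSpace X]
    {κ : X → ProbabilityMeasure Y} :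
    Measurable κ ↔ Measurable fun x => (κ x : Measure Y) := by
  refine ⟨measurable_probabilityMeasure_toMeasure.comp, fun h => ?_⟩
  rw [← isClosedEmbedding_denseIntegrals.measurableEmbedding.measurable_comp_iff]
  refine measurable_pi_iff.2 fun n => ?_
  let K : ProbabilityTheory.Kernel X Y := ⟨fun x => (κ x : Measure Y), h⟩
  have : ProbabilityTheory.IsMarkovKernel K := ⟨fun x => (κ x).2⟩
  exact ((ContinuousMap.continuous _).stronglyMeasurable.integral_kernel (κ := K)).measurable

end ProbabilityMeasureSpace

section Jensen

open ProbabilityTheory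

lemma tendsto_average_eval_infinitePi {Ω : Type*} [MeasurableSpace Ω] (Q : Measure Ω)
    [IsProbabilityMeasure Q] {f : Ω → ℝ} (hf : Measurable f) (hint : Integrable f Q) :
    ∀ᵐ ω ∂(Measure.infinitePi fun _ : ℕ => Q),
      Tendsto (fun n : ℕ => (∑ i ∈ Finset.range (n + 1), f (ω i)) / (n + 1 : ℕ)) atTop
        (𝓝 (∫ x, f x ∂Q)) := by
  have hmp (i : ℕ) := measurePreserving_eval_infinitePi (fun _ : ℕ => Q) i
  have hindep : iIndepFun (fun (i : ℕ) (ω : ℕ → Ω) => f (ω i)) (Measure.infinitePi fun _ => Q) :=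
    iIndepFun_infinitePi (X := fun _ => f) fun _ => hf
  have hlaw (i : ℕ) : (Measure.infinitePi fun _ : ℕ => Q).map (fun ω => f (ω i)) = Q.map f := by
    conv_rhs => rw [← (hmp i).map_eq, Measure.map_map hf (hmp i).measurable]
    rfl
  have h := strong_law_ae_real (μ := Measure.infinitePi fun _ : ℕ => Q)
    (fun i ω => f (ω i)) ((hmp 0).integrable_comp_of_integrable hint)
    (fun i j hij => hindep.indepFun hij)
    fun i => ⟨(hf.comp (hmp i).measurable).aemeasurable,
      (hf.comp (hmp 0).measurable).aemeasurable, (hlaw i).trans (hlaw 0).symm⟩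
  have hmean : ∫ ω, f (ω 0) ∂(Measure.infinitePi fun _ : ℕ => Q) = ∫ x, f x ∂Q :=
    (integral_map (hmp 0).measurable.aemeasurable (by
      rw [(hmp 0).map_eq]; exact hf.aestronglyMeasurable)).symm.trans (by rw [(hmp 0).map_eq])
  filter_upwards [h] with ω hω
  rw [← hmean]
  exact hω.comp (tendsto_add_atTop_nat 1)

lemma exists_average_le {Y : Type*} [MeasurableSpace Y] {F : ProbabilityMeasure Y → ℝ≥0∞}
    (hconv : ∀ (σ₁ σ₂ τ : ProbabilityMeasure Y) (a b : ℝ≥0), a + b = 1 →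
        (τ : Measure Y) = a • (σ₁ : Measure Y) + b • (σ₂ : Measure Y) →
        F τ ≤ a * F σ₁ + b * F σ₂)
    (σ : ℕ → ProbabilityMeasure Y) (n : ℕ) :
    ∃ τ : ProbabilityMeasure Y,
      (τ : Measure Y) = ((n + 1 : ℕ) : ℝ≥0)⁻¹ • ∑ i ∈ Finset.range (n + 1), (σ i : Measure Y) ∧
      F τ ≤ (((n + 1 : ℕ) : ℝ≥0)⁻¹ : ℝ≥0) * ∑ i ∈ Finset.range (n + 1), F (σ i) := by
  induction n with
  | zero => exact ⟨σ 0, by simp, by simp⟩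
  | succ n ih =>
    obtain ⟨τ, hτ, hF⟩ := ih
    set a : ℝ≥0 := (n + 1 : ℕ) / (n + 1 + 1 : ℕ) with ha
    set b : ℝ≥0 := ((n + 1 + 1 : ℕ) : ℝ≥0)⁻¹ with hb
    have hab : a + b = 1 := by
      rw [ha, hb]; push_cast; field_simp
    have hmul : a * ((n + 1 : ℕ) : ℝ≥0)⁻¹ = b := by
      rw [ha, hb]; push_cast; field_simp
    have hmass : IsProbabilityMeasure (a • (τ : Measure Y) + b • (σ (n + 1) : Measure Y)) := by
      constructor
      rw [Measure.add_apply, Measure.smul_apply, Measure.smul_apply, measure_univ, measure_univ,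
        ENNReal.smul_def, ENNReal.smul_def, smul_eq_mul, smul_eq_mul, mul_one, mul_one]
      exact_mod_cast hab
    refine ⟨⟨_, hmass⟩, ?_, ?_⟩
    · rw [ProbabilityMeasure.coe_mk, hτ, smul_smul, hmul, ← smul_add,
        ← Finset.sum_range_succ (fun i => (σ i : Measure Y))]
    · refine (hconv τ (σ (n + 1)) _ a b hab rfl).trans ?_
      rw [Finset.sum_range_succ _ (n + 1), mul_add]
      refine add_le_add ?_ le_rfl
      calc (a : ℝ≥0∞) * F τ ≤ a * (_ * _) := by gcongr
        _ = _ := by rw [← mul_assoc, ← ENNReal.coe_mul, hmul]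

/-- Jensen's inequality for a lower semicontinuous convex function on the space of probability
measures: its value at the barycenter `b` of `Q` is at most its mean under `Q`. -/
lemma apply_barycenter_le_lintegral {Y : Type*} [MetricSpace Y] [CompactSpace Y]
    [MeasurableSpace Y] [BorelSpace Y] {F : ProbabilityMeasure Y → ℝ≥0∞}
    (hlsc : LowerSemicontinuous F)
    (hconv : ∀ (σ₁ σ₂ τ : ProbabilityMeasure Y) (a b : ℝ≥0), a + b = 1 →
        (τ : Measure Y) = a • (σ₁ : Measure Y) + b • (σ₂ : Measure Y) →
        F τ ≤ a * F σ₁ + b * F σ₂)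
    (Q : Measure (ProbabilityMeasure Y)) [IsProbabilityMeasure Q] (b : ProbabilityMeasure Y)
    (hb : ∀ g : C(Y, ℝ), ∫ p, ∫ y, g y ∂(p : Measure Y) ∂Q = ∫ y, g y ∂(b : Measure Y)) :
    F b ≤ ∫⁻ p, F p ∂Q := by
  by_cases hfin : ∫⁻ p, F p ∂Q = ⊤
  · simp [hfin]
  have hFm : Measurable F := hlsc.measurable
  have hFae : ∀ᵐ p ∂Q, F p < ⊤ := ae_lt_top hFm hfin
  have hmean : ∫ p, (F p).toReal ∂Q = (∫⁻ p, F p ∂Q).toReal :=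
    integral_toReal hFm.aemeasurable hFae
  have hcont (n : ℕ) : Continuous fun p : ProbabilityMeasure Y => denseIntegrals p n :=
    ProbabilityMeasure.continuous_integral_continuousMap _
  have hF_lln := tendsto_average_eval_infinitePi Q hFm.ennreal_toReal
    (integrable_toReal_of_lintegral_ne_top hFm.aemeasurable hfin)
  have hg_lln := ae_all_iff.2 fun n : ℕ => tendsto_average_eval_infinitePi Q (hcont n).measurable
    (integrable_continuousMap Q ⟨_, hcont n⟩)
  have hF_fin : ∀ᵐ ω ∂(Measure.infinitePi fun _ : ℕ => Q), ∀ i, F (ω i) < ⊤ :=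
    ae_all_iff.2 fun i =>
      (measurePreserving_eval_infinitePi (fun _ : ℕ => Q) i).quasiMeasurePreserving.ae hFae
  obtain ⟨ω, hωF, hωg, hωfin⟩ := (hF_lln.and (hg_lln.and hF_fin)).exists
  choose τ hτ hFτ using exists_average_le hconv ω
  have hτb : Tendsto τ atTop (𝓝 b) := by
    rw [isClosedEmbedding_denseIntegrals.tendsto_nhds_iff, tendsto_pi_nhds]
    intro k
    have hk := hωg k
    rw [show ∫ p, denseIntegrals p k ∂Q = denseIntegrals b k from hb _] at hk
    refine hk.congr fun n => ?_
    simp only [Function.comp_apply, denseIntegrals]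
    rw [hτ, integral_smul_nnreal_measure, integral_finsetSum_measure fun i _ =>
      integrable_continuousMap _ _, NNReal.smul_def, smul_eq_mul, div_eq_inv_mul]
    push_cast
    rfl
  have hFτ_real (n : ℕ) : F (τ n) ≤
      ENNReal.ofReal ((∑ i ∈ Finset.range (n + 1), (F (ω i)).toReal) / (n + 1 : ℕ)) := by
    refine (hFτ n).trans_eq ?_
    rw [← ENNReal.toReal_sum fun i _ => (hωfin i).ne, div_eq_inv_mul,
      ENNReal.ofReal_mul (by positivity), ENNReal.ofReal_toReal
        (ENNReal.sum_ne_top.2 fun i _ => (hωfin i).ne)]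
    congr 1
    rw [← NNReal.coe_natCast, ← NNReal.coe_inv, ENNReal.ofReal_coe_nnreal]
  have hlim : Tendsto (fun n : ℕ => ENNReal.ofReal
      ((∑ i ∈ Finset.range (n + 1), (F (ω i)).toReal) / (n + 1 : ℕ))) atTop
      (𝓝 (∫⁻ p, F p ∂Q)) := by
    rw [← ENNReal.ofReal_toReal hfin, ← hmean]
    exact (ENNReal.continuous_ofReal.tendsto _).comp hωF
  refine le_of_forall_lt_imp_le_of_dense fun t ht => ge_of_tendsto hlim ?_
  filter_upwards [hτb.eventually (hlsc b t ht)] with n hn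
  exact hn.le.trans (hFτ_real n)

end Jensen

section EInt

lemma eint_eq_lintegral_sub {α : Type*} [MeasurableSpace α] (μ : Measure α)
    [IsProbabilityMeasure μ] {f : α → EReal} (hf : Measurable f) {K : ℝ} (hK : 0 ≤ K)
    (hbdd : ∀ x, ((-K : ℝ) : EReal) ≤ f x) :
    eint μ f = ((∫⁻ x, (f x + K).toENNReal ∂μ : ℝ≥0∞) : EReal) - K := by
  have hpt (x : α) : (f x + K).toENNReal + (-(f x)).toENNReal =
      (f x).toENNReal + ENNReal.ofReal K := by
    have hx := hbdd x
    induction h : f x with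
    | bot => simp [h] at hx
    | top => simp
    | coe r =>
      rw [h] at hx
      have hr : -K ≤ r := by exact_mod_cast hx
      rw [← EReal.coe_add, ← EReal.coe_neg]
      simp only [EReal.real_coe_toENNReal]
      rcases le_total 0 r with h0 | h0
      · rw [ENNReal.ofReal_of_nonpos (p := -r) (by linarith), add_zero,
          ENNReal.ofReal_add h0 hK]
      · rw [ENNReal.ofReal_of_nonpos h0, zero_add,
          ← ENNReal.ofReal_add (by linarith) (by linarith)]
        congr 1; ring
  have hint : ∫⁻ x, (f x + K).toENNReal ∂μ + ∫⁻ x, (-(f x)).toENNReal ∂μ =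
      ∫⁻ x, (f x).toENNReal ∂μ + ENNReal.ofReal K := by
    have hneg : Measurable fun x => (-(f x)).toENNReal :=
      (measurable_neg.comp hf).ereal_toENNReal
    rw [← lintegral_add_right _ hneg]
    simp_rw [hpt]
    rw [lintegral_add_right _ measurable_const]
    simp
  have hfin : ∫⁻ x, (-(f x)).toENNReal ∂μ ≠ ⊤ := by
    refine ne_top_of_le_ne_top (ENNReal.ofReal_ne_top (r := K)) ?_
    calc ∫⁻ x, (-(f x)).toENNReal ∂μ ≤ ∫⁻ _, ENNReal.ofReal K ∂μ := by
          refine lintegral_mono fun x => ?_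
          rw [← EReal.real_coe_toENNReal]
          refine EReal.toENNReal_le_toENNReal ?_
          rw [EReal.neg_le, ← EReal.coe_neg]
          exact hbdd x
      _ = _ := by simp
  change ((∫⁻ x, (f x).toENNReal ∂μ : ℝ≥0∞) : EReal) -
    ((∫⁻ x, (-(f x)).toENNReal ∂μ : ℝ≥0∞) : EReal) = _
  generalize ∫⁻ x, (f x + K).toENNReal ∂μ = A at *
  generalize ∫⁻ x, (-(f x)).toENNReal ∂μ = B at *
  generalize ∫⁻ x, (f x).toENNReal ∂μ = C at *
  lift B to ℝ≥0 using hfin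
  lift K to ℝ≥0 using hK
  rw [ENNReal.ofReal_coe_nnreal] at hint
  induction A with
  | top =>
    have : C = ⊤ := by
      by_contra hC
      lift C to ℝ≥0 using hC
      simp [← ENNReal.coe_add] at hint
    subst this
    rfl
  | coe A =>
    have : C ≠ ⊤ := by
      rintro rfl
      simp [← ENNReal.coe_add] at hint
    lift C to ℝ≥0 using this
    have h : (A : ℝ) + B = C + K := by exact_mod_cast hint
    change ((C : ℝ) : EReal) - ((B : ℝ) : EReal) = ((A : ℝ) : EReal) - ((K : ℝ) : EReal)
    norm_cast
    linarith

end EInt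

lemma toENNReal_add_le_of_convexCombination {u v w : EReal} {K : ℝ} (hu : ((-K : ℝ) : EReal) ≤ u)
    (hv : ((-K : ℝ) : EReal) ≤ v) {a b : ℝ≥0} (hab : a + b = 1)
    (hw : w ≤ ((a : ℝ) : EReal) * u + ((b : ℝ) : EReal) * v) :
    (w + K).toENNReal ≤ a * (u + K).toENNReal + b * (v + K).toENNReal := by
  rcases eq_or_ne a 0 with rfl | ha
  · obtain rfl : b = 1 := by simpa using hab
    simpa using EReal.toENNReal_le_toENNReal (add_le_add_left (by simpa using hw) (K : EReal))
  rcases eq_or_ne b 0 with rfl | hb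
  · obtain rfl : a = 1 := by simpa using hab
    simpa using EReal.toENNReal_le_toENNReal (add_le_add_left (by simpa using hw) (K : EReal))
  induction hu' : u with
  | bot => simp [hu'] at hu
  | top => simp [ENNReal.mul_top, ha]
  | coe r =>
    induction hv' : v with
    | bot => simp [hv'] at hv
    | top => simp [ENNReal.mul_top, hb]
    | coe s =>
      rw [hu'] at hu hw
      rw [hv'] at hv hw
      have hr : -K ≤ r := by exact_mod_cast hu
      have hs : -K ≤ s := by exact_mod_cast hv
      have hab' : (a : ℝ) + b = 1 := by exact_mod_cast hab
      refine (EReal.toENNReal_le_toENNReal (add_le_add_left hw (K : EReal))).trans_eq ?_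
      simp only [← EReal.coe_mul, ← EReal.coe_add, EReal.real_coe_toENNReal]
      rw [← ENNReal.ofReal_coe_nnreal (p := a), ← ENNReal.ofReal_coe_nnreal (p := b),
        ← ENNReal.ofReal_mul a.coe_nonneg, ← ENNReal.ofReal_mul b.coe_nonneg,
        ← ENNReal.ofReal_add (mul_nonneg a.coe_nonneg (by linarith))
          (mul_nonneg b.coe_nonneg (by linarith))]
      congr 1
      linear_combination (-K) * hab'

section Lifting

open ProbabilityTheory

lemma integral_measure_comp {α β : Type*} [MeasurableSpace α] [MeasurableSpace β]
    {μ : Measure α} [SFinite μ] {K : Kernel α β} [IsSFiniteKernel K] {f : β → ℝ}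
    (hf : Integrable f (K ∘ₘ μ)) : ∫ y, f y ∂(K ∘ₘ μ) = ∫ x, ∫ y, f y ∂K x ∂μ := by
  rw [Measure.comp_eq_comp_const_apply] at hf ⊢
  rw [Kernel.integral_comp hf, Kernel.const_apply]

/-- The space `P(Y)` is a Markov kernel to `Y`, each probability measure being sent to itself. -/
def evalKernel (Y : Type*) [MetricSpace Y] [MeasurableSpace Y] [BorelSpace Y] :
    Kernel (ProbabilityMeasure Y) Y :=
  ⟨fun p => (p : Measure Y), measurable_probabilityMeasure_toMeasure⟩

instance isMarkovKernel_evalKernel (Y : Type*) [MetricSpace Y] [MeasurableSpace Y]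
    [BorelSpace Y] : IsMarkovKernel (evalKernel Y) := ⟨fun p => p.2⟩

variable {X Y : Type*} [MetricSpace X] [CompactSpace X] [MeasurableSpace X] [BorelSpace X]
    [MetricSpace Y] [CompactSpace Y] [MeasurableSpace Y] [BorelSpace Y]

lemma IsDisintegration.integral_integral {π : ProbabilityMeasure (X × Y)}
    {μ : ProbabilityMeasure X} {ν : ProbabilityMeasure Y} {κ : X → ProbabilityMeasure Y}
    (hκ : IsDisintegration π μ κ) (hπ : IsCoupling π μ ν) (g : C(Y, ℝ)) :
    ∫ x, ∫ y, g y ∂(κ x : Measure Y) ∂(μ : Measure X) = ∫ y, g y ∂(ν : Measure Y) := by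
  let K : Kernel X Y := ⟨fun x => (κ x : Measure Y), hκ.1⟩
  have : IsMarkovKernel K := ⟨fun x => (κ x).2⟩
  have hν : (ν : Measure Y) = K ∘ₘ (μ : Measure X) := by
    ext B hB
    rw [← hπ.2, Measure.map_apply measurable_snd hB, Measure.bind_apply hB K.measurable.aemeasurable,
      ← univ_prod, hκ.2 univ B .univ hB, Measure.restrict_univ]
    rfl
  rw [hν, integral_measure_comp (integrable_continuousMap _ g)]
  rfl

lemma exists_coupling_of_kernel (μ : ProbabilityMeasure X) (ν : ProbabilityMeasure Y)
    {κ : X → ProbabilityMeasure Y} (hκ : Measurable κ)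
    (hν : ∀ g : C(Y, ℝ), ∫ x, ∫ y, g y ∂(κ x : Measure Y) ∂(μ : Measure X) =
      ∫ y, g y ∂(ν : Measure Y)) :
    ∃ π : ProbabilityMeasure (X × Y), IsCoupling π μ ν ∧ IsDisintegration π μ κ := by
  have hκ' := measurable_probabilityMeasure_iff.1 hκ
  let K : Kernel X Y := ⟨fun x => (κ x : Measure Y), hκ'⟩
  have : IsMarkovKernel K := ⟨fun x => (κ x).2⟩
  refine ⟨⟨(μ : Measure X) ⊗ₘ K, inferInstance⟩, ⟨Measure.fst_compProd _ _, ?_⟩, hκ',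
    fun A B hA hB => Measure.compProd_apply_prod hA hB⟩
  refine (Measure.snd_compProd _ _).trans (measure_eq_of_forall_integral_eq fun g => ?_)
  rw [integral_measure_comp (integrable_continuousMap _ g)]
  exact hν g

omit [MetricSpace X] [CompactSpace X] [BorelSpace X] in
lemma exists_barycenter_kernel (P : ProbabilityMeasure (X × ProbabilityMeasure Y)) :
    ∃ (L : Kernel X (ProbabilityMeasure Y)) (κ : X → ProbabilityMeasure Y), IsMarkovKernel L ∧
      (P : Measure (X × ProbabilityMeasure Y)) =
        (P : Measure (X × ProbabilityMeasure Y)).fst ⊗ₘ L ∧ Measurable κ ∧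
      ∀ x (g : C(Y, ℝ)), ∫ p, ∫ y, g y ∂(p : Measure Y) ∂L x = ∫ y, g y ∂(κ x : Measure Y) := by
  have : Nonempty (ProbabilityMeasure Y) := P.nonempty.map Prod.snd
  let L := (P : Measure (X × ProbabilityMeasure Y)).condKernel
  refine ⟨L, fun x => ⟨(evalKernel Y ∘ₖ L) x, inferInstance⟩, inferInstance,
    (Measure.disintegrate _ _).symm,
    measurable_probabilityMeasure_iff.2 (evalKernel Y ∘ₖ L).measurable, fun x g => ?_⟩
  exact (Kernel.integral_comp (integrable_continuousMap ((evalKernel Y ∘ₖ L) x) g)).symm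

end Lifting

/-- **Lifting of the optimal weak transport.**  The optimal weak transport cost
`V_c(μ,ν)` coincides with a plain optimal transport problem on the enlarged state
space `X × P(Y)`, over measures with first marginal `μ` and second marginal with
barycenter `ν`. -/
theorem weakTransport_eq_lifted
    {X Y : Type*} [MetricSpace X] [CompactSpace X] [MeasurableSpace X] [BorelSpace X]
    [MetricSpace Y] [CompactSpace Y] [MeasurableSpace Y] [BorelSpace Y]
    (c : X → ProbabilityMeasure Y → EReal)
    (hbot : ∀ x σ, c x σ ≠ ⊥)
    (hbdd : ∃ m : ℝ, ∀ x σ, (m : EReal) ≤ c x σ)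
    (hproper : ∀ x, ∃ σ, c x σ ≠ ⊤)
    (hlsc : LowerSemicontinuous (fun p : X × ProbabilityMeasure Y => c p.1 p.2))
    (hconv : ∀ (x : X) (σ₁ σ₂ τ : ProbabilityMeasure Y) (a b : ℝ≥0), a + b = 1 →
        (τ : Measure Y) = a • (σ₁ : Measure Y) + b • (σ₂ : Measure Y) →
        c x τ ≤ ((a : ℝ) : EReal) * c x σ₁ + ((b : ℝ) : EReal) * c x σ₂)
    (μ : ProbabilityMeasure X) (ν : ProbabilityMeasure Y) :
    weakTransport c μ ν =
      ⨅ P ∈ {P : ProbabilityMeasure (X × ProbabilityMeasure Y) |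
          (P : Measure (X × ProbabilityMeasure Y)).map Prod.fst = (μ : Measure X) ∧
          ∀ g : C(Y, ℝ),
            (∫ p, (∫ y, g y ∂(p : Measure Y))
                ∂((P : Measure (X × ProbabilityMeasure Y)).map Prod.snd))
              = ∫ y, g y ∂(ν : Measure Y)},
        eint (P : Measure (X × ProbabilityMeasure Y)) (fun q => c q.1 q.2) := by
  obtain ⟨m, hm⟩ := hbdd
  obtain ⟨K, hK, hcK⟩ : ∃ K : ℝ, 0 ≤ K ∧ ∀ x σ, ((-K : ℝ) : EReal) ≤ c x σ :=
    ⟨|m|, abs_nonneg m, fun x σ => le_trans (by exact_mod_cast neg_abs_le m) (hm x σ)⟩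
  have hcm : Measurable fun q : X × ProbabilityMeasure Y => c q.1 q.2 := hlsc.measurable
  have hshift : Measurable fun q : X × ProbabilityMeasure Y => (c q.1 q.2 + K).toENNReal :=
    (hcm.add_const _).ereal_toENNReal
  have hFlsc (x : X) : LowerSemicontinuous fun σ => (c x σ + K).toENNReal := by
    have hcont : Continuous fun t : EReal => (t + K).toENNReal :=
      EReal.continuous_toENNReal.comp (continuous_iff_continuousAt.2 fun t =>
        (EReal.continuousAt_add (Or.inr (EReal.coe_ne_bot K)) (Or.inr (EReal.coe_ne_top K))).comp
          (continuousAt_id.prodMk continuousAt_const))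
    exact hcont.comp_lowerSemicontinuous (hlsc.comp (Continuous.prodMk_right x))
      fun s t hst => EReal.toENNReal_le_toENNReal (add_le_add_left hst _)
  apply le_antisymm
  · refine le_iInf₂ fun P hP => ?_
    obtain ⟨L, κ, hL, hPL, hκ, hbary⟩ := exists_barycenter_kernel P
    have hfst : (P : Measure (X × ProbabilityMeasure Y)).fst = μ := hP.1
    rw [hfst] at hPL
    have hsnd : (P : Measure (X × ProbabilityMeasure Y)).map Prod.snd = (μ : Measure X).bind L := by
      rw [hPL]
      exact Measure.snd_compProd _ _
    obtain ⟨π, hπ, hπκ⟩ := exists_coupling_of_kernel μ ν hκ fun g => by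
      have hg := hP.2 g
      rw [hsnd, integral_measure_comp (f := fun p : ProbabilityMeasure Y =>
        ∫ y, g y ∂(p : Measure Y)) (integrable_continuousMap _
          ⟨_, ProbabilityMeasure.continuous_integral_continuousMap g⟩)] at hg
      simpa only [hbary] using hg
    refine (iInf₂_le π hπ).trans ((iInf₂_le κ hπκ).trans ?_)
    rw [eint_eq_lintegral_sub _ (f := fun x => c x (κ x)) (hcm.comp (measurable_id.prodMk hκ)) hK
        fun x => hcK _ _,
      eint_eq_lintegral_sub _ hcm hK fun q => hcK _ _]
    refine EReal.sub_le_sub (EReal.coe_ennreal_le_coe_ennreal_iff.2 ?_) le_rfl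
    rw [hPL, Measure.lintegral_compProd hshift]
    exact lintegral_mono fun x => apply_barycenter_le_lintegral (hFlsc x)
      (fun σ₁ σ₂ τ a b hab hτ => toENNReal_add_le_of_convexCombination (hcK x σ₁) (hcK x σ₂) hab
        (hconv x σ₁ σ₂ τ a b hab hτ)) (L x) (κ x) (hbary x)
  · refine le_iInf₂ fun π hπ => le_iInf₂ fun κ hκ => ?_
    have hκm : Measurable κ := measurable_probabilityMeasure_iff.2 hκ.1
    have hgraph : Measurable fun x => (x, κ x) := measurable_id.prodMk hκm
    let P : ProbabilityMeasure (X × ProbabilityMeasure Y) := μ.map hgraph.aemeasurable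
    have hP : (P : Measure (X × ProbabilityMeasure Y)) = (μ : Measure X).map fun x => (x, κ x) :=
      rfl
    refine (iInf₂_le P (show _ ∧ _ from ⟨?fst, fun g => ?bary⟩)).trans_eq ?cost
    case fst =>
      rw [hP, Measure.map_map measurable_fst hgraph]
      exact Measure.map_id
    case bary =>
      rw [hP, Measure.map_map measurable_snd hgraph, integral_map
        (measurable_snd.comp hgraph).aemeasurable
        (ProbabilityMeasure.continuous_integral_continuousMap g).aestronglyMeasurable]
      exact hκ.integral_integral hπ g
    case cost =>
      rw [eint_eq_lintegral_sub _ (f := fun x => c x (κ x)) (hcm.comp hgraph) hK fun x => hcK _ _,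
        eint_eq_lintegral_sub _ hcm hK fun q => hcK _ _, hP, lintegral_map hshift hgraph]
end
end

section
/- Let X and Y be compact metric spaces. (i) Let c : X × P(Y) → (−∞,+∞] be bounded below and lower semicontinuous, with σ ↦ c(x,σ) proper and convex for each x, and set V_c(μ,ν) := inf{ ∫_X c(x,π_x) dμ : π coupling of μ and ν }. Then for every μ ∈ P(X) and g ∈ C(Y): sup_{ν∈P(Y)} { ∫_Y g dν − V_c(μ,ν) } = ∫_X T⁻g dμ, where T⁻g(x) := sup_{σ∈P(Y)} { ∫_Y g dσ − c(x,σ) }. (ii) Conversely, if 𝒯 is a standard backward linear transfer on P(X) × P(Y), then for all (μ,ν): 𝒯(μ,ν) = inf{ ∫_X 𝒯(δ_x, π_x) dμ(x) : π coupling of μ and ν }, and whenever 𝒯(μ,ν) < +∞ the infimum is attained: there is a coupling π of μ and ν whose disintegration satisfies 𝒯(δ_x, π_x) < +∞ for μ-a.e. x and 𝒯(μ,ν) = ∫_X 𝒯(δ_x, π_x) dμ(x). -/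
open MeasureTheory Topology Filter Set
open scoped ENNReal NNReal

noncomputable section

/-- The operator `Tg(x) = sup_{σ ∈ P(Y)} { ∫ g dσ − c(x,σ) }` associated to a cost
`c : X × P(Y) → (−∞,∞]`. -/
def costOp {X Y : Type*} [TopologicalSpace Y] [MeasurableSpace Y]
    (c : X → ProbabilityMeasure Y → EReal) (g : C(Y, ℝ)) (x : X) : EReal :=
  ⨆ σ : ProbabilityMeasure Y, (((∫ y, g y ∂(σ : Measure Y)) : ℝ) : EReal) - c x σ

/-- The backward Kantorovich operator of a transfer functional `𝒯`, on continuous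
functions: `T⁻g(x) = sup_{σ ∈ P(Y)} { ∫ g dσ − 𝒯(δ_x, σ) }`. -/
def TopC {X Y : Type*} [MeasurableSpace X] [TopologicalSpace Y] [MeasurableSpace Y]
    (𝒯 : ProbabilityMeasure X → ProbabilityMeasure Y → EReal)
    (g : C(Y, ℝ)) (x : X) : EReal :=
  ⨆ σ : ProbabilityMeasure Y, (((∫ y, g y ∂(σ : Measure Y)) : ℝ) : EReal) - 𝒯 (diracP x) σ

/-- The backward Kantorovich operator of a transfer functional `𝒯`, extended to
extended-real-valued functions. -/
def TopU {X Y : Type*} [MeasurableSpace X] [MeasurableSpace Y]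
    (𝒯 : ProbabilityMeasure X → ProbabilityMeasure Y → EReal)
    (g : Y → EReal) (x : X) : EReal :=
  ⨆ σ : ProbabilityMeasure Y, eint (σ : Measure Y) g - 𝒯 (diracP x) σ

/-- A backward linear transfer: a proper, bounded below, jointly convex,
weak*-lower semicontinuous functional on `P(X) × P(Y)` with values in `ℝ ∪ {+∞}`,
such that the Legendre transform of each partial map `𝒯(μ,·)` is given by
integrating the backward Kantorovich operator against `μ`. -/
def IsBLT {X Y : Type*} [TopologicalSpace X] [MeasurableSpace X] [OpensMeasurableSpace X]
    [TopologicalSpace Y] [MeasurableSpace Y] [OpensMeasurableSpace Y]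
    (𝒯 : ProbabilityMeasure X → ProbabilityMeasure Y → EReal) : Prop :=
  (∀ μ ν, 𝒯 μ ν ≠ ⊥) ∧
  (∃ μ ν, 𝒯 μ ν ≠ ⊤) ∧
  (∃ m : ℝ, ∀ μ ν, (m : EReal) ≤ 𝒯 μ ν) ∧
  (∀ (μ₁ μ₂ : ProbabilityMeasure X) (ν₁ ν₂ : ProbabilityMeasure Y)
      (μ : ProbabilityMeasure X) (ν : ProbabilityMeasure Y) (a b : ℝ≥0),
      a + b = 1 →
      (μ : Measure X) = a • (μ₁ : Measure X) + b • (μ₂ : Measure X) →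
      (ν : Measure Y) = a • (ν₁ : Measure Y) + b • (ν₂ : Measure Y) →
      𝒯 μ ν ≤ ((a : ℝ) : EReal) * 𝒯 μ₁ ν₁ + ((b : ℝ) : EReal) * 𝒯 μ₂ ν₂) ∧
  LowerSemicontinuous (fun p : ProbabilityMeasure X × ProbabilityMeasure Y => 𝒯 p.1 p.2) ∧
  (∀ (μ : ProbabilityMeasure X) (g : C(Y, ℝ)),
      (⨆ σ : ProbabilityMeasure Y,
        (((∫ y, g y ∂(σ : Measure Y)) : ℝ) : EReal) - 𝒯 μ σ)
        = eint (μ : Measure X) (TopC 𝒯 g))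

/-- A transfer is standard if every Dirac measure admits a finite-cost target. -/
def IsStandardT {X Y : Type*} [MeasurableSpace X] [MeasurableSpace Y]
    (𝒯 : ProbabilityMeasure X → ProbabilityMeasure Y → EReal) : Prop :=
  ∀ x : X, ∃ σ : ProbabilityMeasure Y, 𝒯 (diracP x) σ ≠ ⊤

theorem toENNReal_add_ofReal_identity (F : ℝ≥0∞) (u : ℝ) :
    ((F : EReal) + (u : EReal)).toENNReal + ENNReal.ofReal (-u)
      = F + ENNReal.ofReal u + (-((F : EReal) + (u : EReal))).toENNReal := by
  induction F with
  | top => simp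
  | coe a =>
    have h : (((a : ℝ≥0∞) : EReal) + (u : EReal)) = (((a : ℝ) + u : ℝ) : EReal) := rfl
    rw [h, ← EReal.coe_neg, EReal.toENNReal_of_ne_top (EReal.coe_ne_top _),
      EReal.toENNReal_of_ne_top (EReal.coe_ne_top _), EReal.toReal_coe, EReal.toReal_coe]
    have ha : (a : ℝ≥0∞) = ENNReal.ofReal a := by simp
    rw [ha]
    have ha0 : (0 : ℝ) ≤ a := a.2
    rcases le_total 0 u with hu | hu <;> rcases le_total 0 ((a : ℝ) + u) with hs | hs
    · rw [ENNReal.ofReal_of_nonpos (neg_nonpos.2 hu), ENNReal.ofReal_of_nonpos (neg_nonpos.2 hs),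
        ← ENNReal.ofReal_add ha0 hu]
    · have : (a : ℝ) = 0 := by linarith
      have h2 : u = 0 := by linarith
      simp [this, h2]
    · rw [ENNReal.ofReal_of_nonpos hu, ENNReal.ofReal_of_nonpos (neg_nonpos.2 hs),
        ← ENNReal.ofReal_add hs (by linarith)]
      simp
    · rw [ENNReal.ofReal_of_nonpos hu, ENNReal.ofReal_of_nonpos hs, add_zero, zero_add,
        ← ENNReal.ofReal_add ha0 (by linarith)]
      congr 1; ring

section

variable {α : Type*} [MeasurableSpace α] {μ : Measure α}

theorem eint_mono {f g : α → EReal} (h : ∀ x, f x ≤ g x) : eint μ f ≤ eint μ g := by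
  refine EReal.sub_le_sub ?_ ?_
  · exact EReal.coe_ennreal_le_coe_ennreal_iff.2
      (lintegral_mono fun x => EReal.toENNReal_le_toENNReal (h x))
  · exact EReal.coe_ennreal_le_coe_ennreal_iff.2
      (lintegral_mono fun x => EReal.toENNReal_le_toENNReal (EReal.neg_le_neg_iff.2 (h x)))

/-- The signed integral of the sum of a nonnegative function and an integrable real function. -/
theorem eint_coe_add_coe {F : α → ℝ≥0∞} (hF : Measurable F) {u : α → ℝ} (hu : Measurable u)
    (hui : Integrable u μ) :
    eint μ (fun x => (F x : EReal) + (u x : EReal))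
      = ((∫⁻ x, F x ∂μ : ℝ≥0∞) : EReal) + ((∫ x, u x ∂μ : ℝ) : EReal) := by
  set f : α → EReal := fun x => (F x : EReal) + (u x : EReal) with hf
  have hfm : Measurable f := by
    exact (hF.coe_ereal_ennreal).add hu.coe_real_ereal
  have hI := lintegral_congr (μ := μ) fun x => toENNReal_add_ofReal_identity (F x) (u x)
  rw [lintegral_add_left hfm.ereal_toENNReal,
    lintegral_add_right _ (show Measurable fun x => (-(f x)).toENNReal from
      hfm.neg.ereal_toENNReal),
    lintegral_add_left hF] at hI
  have hp : ∫⁻ x, ENNReal.ofReal (u x) ∂μ ≠ ∞ := hui.lintegral_lt_top.ne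
  have hn : ∫⁻ x, ENNReal.ofReal (-u x) ∂μ ≠ ∞ := hui.neg.lintegral_lt_top.ne
  have hc : ∫⁻ x, (-(f x)).toENNReal ∂μ ≠ ∞ := by
    refine ne_top_of_le_ne_top hn (lintegral_mono fun x => ?_)
    have : -(f x) ≤ ((-u x : ℝ) : EReal) := by
      rw [EReal.coe_neg, EReal.neg_le_neg_iff]
      calc ((u x : ℝ) : EReal) = 0 + (u x : EReal) := by simp
        _ ≤ f x := add_le_add_left (EReal.coe_ennreal_nonneg _) _
    have := EReal.toENNReal_le_toENNReal this
    rwa [EReal.toENNReal_of_ne_top (EReal.coe_ne_top _), EReal.toReal_coe] at this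
  change ((∫⁻ x, (f x).toENNReal ∂μ : ℝ≥0∞) : EReal) -
    ((∫⁻ x, (-(f x)).toENNReal ∂μ : ℝ≥0∞) : EReal) = _
  rw [integral_eq_lintegral_pos_part_sub_lintegral_neg_part hui]
  have hI' : (∫⁻ x, (f x).toENNReal ∂μ) + ∫⁻ x, ENNReal.ofReal (-u x) ∂μ
     = ∫⁻ x, F x ∂μ + ∫⁻ x, ENNReal.ofReal (u x) ∂μ + ∫⁻ x, (-(f x)).toENNReal ∂μ := hI
  generalize (∫⁻ x, (f x).toENNReal ∂μ) = A at *
  generalize (∫⁻ x, (-(f x)).toENNReal ∂μ) = C at *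
  generalize (∫⁻ x, ENNReal.ofReal (u x) ∂μ) = p at *
  generalize (∫⁻ x, ENNReal.ofReal (-u x) ∂μ) = n at *
  generalize (∫⁻ x, F x ∂μ) = B at *
  lift p to ℝ≥0 using hp
  lift n to ℝ≥0 using hn
  lift C to ℝ≥0 using hc
  induction B with
  | top =>
    have : A = ⊤ := by
      by_contra hA
      lift A to ℝ≥0 using hA
      simp at hI'
    subst this
    simp
    rfl
  | coe b =>
    have : A ≠ ⊤ := by
      rintro rfl
      rw [top_add] at hI'
      exact absurd hI'.symm (by exact_mod_cast ENNReal.coe_ne_top)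
    lift A to ℝ≥0 using this
    have h' : (A : ℝ) + n = b + p + C := by exact_mod_cast hI'
    change (((A : ℝ) - C : ℝ) : EReal) = (((b : ℝ) + ((p : ℝ) - n) : ℝ) : EReal)
    congr 1; linarith

theorem eint_coe {u : α → ℝ} (hu : Measurable u) (hui : Integrable u μ) :
    eint μ (fun x => (u x : EReal)) = ((∫ x, u x ∂μ : ℝ) : EReal) := by
  simpa using eint_coe_add_coe (μ := μ) (F := 0) measurable_const hu hui

theorem coe_toENNReal_sub_add {a : EReal} {m : ℝ} (h : (m : EReal) ≤ a) :
    (((a - (m : EReal)).toENNReal : ℝ≥0∞) : EReal) + (m : EReal) = a := by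
  rw [EReal.coe_toENNReal (by simpa using (EReal.sub_nonneg (by simp) (by simp)).2 h)]
  exact EReal.sub_add_cancel

theorem measurable_sub_coe_toENNReal {f : α → EReal} (hf : Measurable f) (m : ℝ) :
    Measurable fun x => (f x - (m : EReal)).toENNReal :=
  (hf.sub measurable_const).ereal_toENNReal

theorem eint_eq_lintegral_sub_add [IsProbabilityMeasure μ] {f : α → EReal} (hf : Measurable f)
    {m : ℝ} (hm : ∀ x, (m : EReal) ≤ f x) :
    eint μ f = ((∫⁻ x, (f x - (m : EReal)).toENNReal ∂μ : ℝ≥0∞) : EReal) + (m : EReal) := by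
  have h := eint_coe_add_coe (μ := μ) (F := fun x => (f x - (m : EReal)).toENNReal)
    (measurable_sub_coe_toENNReal hf m) (u := fun _ => m) measurable_const
    (integrable_const _)
  simp only [coe_toENNReal_sub_add (hm _)] at h
  simpa using h

theorem eint_add_coe [IsProbabilityMeasure μ] {f : α → EReal} (hf : Measurable f)
    {m : ℝ} (hm : ∀ x, (m : EReal) ≤ f x) {u : α → ℝ} (hu : Measurable u)
    (hui : Integrable u μ) :
    eint μ (fun x => f x + (u x : EReal)) = eint μ f + ((∫ x, u x ∂μ : ℝ) : EReal) := by
  have h := eint_coe_add_coe (μ := μ) (F := fun x => (f x - (m : EReal)).toENNReal)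
    (measurable_sub_coe_toENNReal hf m) (u := fun x => m + u x) (hu.const_add _)
    ((integrable_const _).add hui)
  simp only [EReal.coe_add, ← add_assoc, coe_toENNReal_sub_add (hm _)] at h
  rw [h, integral_add (integrable_const _) hui, eint_eq_lintegral_sub_add hf hm, EReal.coe_add,
    ← add_assoc]
  simp

theorem le_eint [IsProbabilityMeasure μ] {f : α → EReal} {m : ℝ} (hm : ∀ x, (m : EReal) ≤ f x) :
    (m : EReal) ≤ eint μ f := by
  calc (m : EReal) = eint μ (fun _ => (m : EReal)) := by
        rw [eint_coe measurable_const (integrable_const _)]; simp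
    _ ≤ _ := eint_mono hm

theorem eint_neg [IsProbabilityMeasure μ] {f : α → EReal} {m : ℝ} (hm : ∀ x, (m : EReal) ≤ f x) :
    eint μ (fun x => -f x) = -eint μ f := by
  have hc : ∫⁻ x, epos (-(f x)) ∂μ ≠ ∞ := by
    refine ne_top_of_le_ne_top (b := ENNReal.ofReal (-m)) ENNReal.ofReal_ne_top ?_
    calc ∫⁻ x, epos (-(f x)) ∂μ ≤ ∫⁻ _, ENNReal.ofReal (-m) ∂μ := by
          refine lintegral_mono fun x => ?_
          have : -(f x) ≤ ((-m : ℝ) : EReal) := by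
            rw [EReal.coe_neg, EReal.neg_le_neg_iff]; exact hm x
          have := EReal.toENNReal_le_toENNReal this
          rwa [EReal.toENNReal_of_ne_top (EReal.coe_ne_top _), EReal.toReal_coe] at this
      _ = _ := by simp
  unfold eint
  simp only [neg_neg]
  rw [EReal.neg_sub]
  · rw [add_comm]; rfl
  · left; exact EReal.coe_ennreal_ne_bot _
  · right; simpa using hc

theorem ae_ne_top_of_eint_ne_top [IsProbabilityMeasure μ] {f : α → EReal} (hf : Measurable f)
    {m : ℝ} (hm : ∀ x, (m : EReal) ≤ f x) (h : eint μ f ≠ ⊤) : ∀ᵐ x ∂μ, f x ≠ ⊤ := by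
  rw [eint_eq_lintegral_sub_add hf hm] at h
  have h' : ∫⁻ x, (f x - (m : EReal)).toENNReal ∂μ ≠ ∞ := by
    intro h0; rw [h0] at h; simp at h
  filter_upwards [ae_lt_top (measurable_sub_coe_toENNReal hf m) h'] with x hx hx'
  simp [hx'] at hx

theorem eint_convex [IsProbabilityMeasure μ] {f g : α → EReal} (hf : Measurable f)
    (hg : Measurable g) {m : ℝ} (hfm : ∀ x, (m : EReal) ≤ f x) (hgm : ∀ x, (m : EReal) ≤ g x)
    {a b : ℝ≥0} (hab : a + b = 1) :
    eint μ (fun x => ((a : ℝ) : EReal) * f x + ((b : ℝ) : EReal) * g x)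
      = ((a : ℝ) : EReal) * eint μ f + ((b : ℝ) : EReal) * eint μ g := by
  have hab' : (a : ℝ) * m + b * m = m := by
    rw [← add_mul]; have : (a : ℝ) + b = 1 := by exact_mod_cast hab
    rw [this, one_mul]
  have key : ∀ p q : ℝ≥0∞, ((a : ℝ) : EReal) * ((p : EReal) + (m : EReal))
      + ((b : ℝ) : EReal) * ((q : EReal) + (m : EReal))
      = ((a * p + b * q : ℝ≥0∞) : EReal) + (m : EReal) := by
    intro p q
    have ha : (0 : EReal) ≤ ((a : ℝ) : EReal) := EReal.coe_nonneg.2 a.2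
    have hb : (0 : EReal) ≤ ((b : ℝ) : EReal) := EReal.coe_nonneg.2 b.2
    rw [EReal.left_distrib_of_nonneg_of_ne_top ha (EReal.coe_ne_top _),
      EReal.left_distrib_of_nonneg_of_ne_top hb (EReal.coe_ne_top _), add_add_add_comm,
      EReal.coe_ennreal_add, EReal.coe_ennreal_mul, EReal.coe_ennreal_mul, ← EReal.coe_mul,
      ← EReal.coe_mul, ← EReal.coe_add, hab']
    rfl
  have h := eint_coe_add_coe (μ := μ)
    (F := fun x => a * (f x - (m : EReal)).toENNReal + b * (g x - (m : EReal)).toENNReal)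
    (((measurable_sub_coe_toENNReal hf m).const_mul _).add
      ((measurable_sub_coe_toENNReal hg m).const_mul _)) (u := fun _ => m) measurable_const
    (integrable_const _)
  rw [lintegral_add_left ((measurable_sub_coe_toENNReal hf m).const_mul _),
    lintegral_const_mul _ (measurable_sub_coe_toENNReal hf m),
    lintegral_const_mul _ (measurable_sub_coe_toENNReal hg m)] at h
  simp only [← key, coe_toENNReal_sub_add (hfm _), coe_toENNReal_sub_add (hgm _)] at h
  rw [h, eint_eq_lintegral_sub_add hf hfm, eint_eq_lintegral_sub_add hg hgm, key]
  simp

/-- Monotone convergence for the signed integral of a countable supremum. -/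
theorem exists_lt_eint_of_lt_eint_iSup [IsProbabilityMeasure μ] {f : ℕ → α → EReal}
    (hf : ∀ n, Measurable (f n)) (hmono : ∀ x, Monotone fun n => f n x)
    {m : ℝ} (hm : ∀ x, (m : EReal) ≤ f 0 x) {t : ℝ}
    (ht : (t : EReal) < eint μ (fun x => ⨆ n, f n x)) : ∃ n, (t : EReal) < eint μ (f n) := by
  have hm' : ∀ n x, (m : EReal) ≤ f n x := fun n x => (hm x).trans (hmono x (Nat.zero_le n))
  rw [eint_eq_lintegral_sub_add (Measurable.iSup hf)
    (fun x => (hm x).trans (le_iSup (fun n => f n x) 0))] at ht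
  have hsup : ∀ x, ((⨆ n, f n x) - (m : EReal)).toENNReal =
      ⨆ n, (f n x - (m : EReal)).toENNReal := by
    intro x
    refine le_antisymm ?_ (iSup_le fun n =>
      EReal.toENNReal_le_toENNReal (EReal.sub_le_sub (le_iSup (fun n => f n x) n) le_rfl))
    rw [← EReal.toENNReal_coe (x := ⨆ n, (f n x - (m : EReal)).toENNReal)]
    refine EReal.toENNReal_le_toENNReal (EReal.sub_le_of_le_add (iSup_le fun n => ?_))
    calc f n x = _ := (coe_toENNReal_sub_add (hm' n x)).symm
      _ ≤ _ := add_le_add_left (EReal.coe_ennreal_le_coe_ennreal_iff.2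
          (le_iSup (fun n => (f n x - (m : EReal)).toENNReal) n)) _
  simp only [hsup] at ht
  rw [lintegral_iSup (fun n => measurable_sub_coe_toENNReal (hf n) m)
    (fun i j hij x => EReal.toENNReal_le_toENNReal (EReal.sub_le_sub (hmono x hij) le_rfl))] at ht
  by_contra! hcon
  have hmt : m ≤ t := EReal.coe_le_coe_iff.1 ((le_eint hm).trans (hcon 0))
  have hle : ∀ n, ∫⁻ x, (f n x - (m : EReal)).toENNReal ∂μ ≤ ENNReal.ofReal (t - m) := by
    intro n
    have h := hcon n
    rw [eint_eq_lintegral_sub_add (hf n) (hm' n), ← EReal.le_sub_iff_add_le (by simp) (by simp),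
      ← EReal.coe_sub] at h
    have h' := EReal.toENNReal_le_toENNReal h
    rwa [EReal.toENNReal_coe, EReal.toENNReal_of_ne_top (EReal.coe_ne_top _),
      EReal.toReal_coe] at h'
  refine absurd ht (not_lt.2 ?_)
  calc _ ≤ ((ENNReal.ofReal (t - m) : ℝ≥0∞) : EReal) + (m : EReal) :=
        add_le_add_left (EReal.coe_ennreal_le_coe_ennreal_iff.2 (iSup_le hle)) _
    _ = t := by
        rw [EReal.coe_ennreal_ofReal, max_eq_left (by linarith), ← EReal.coe_add]; simp

end

/-- Convexity of an extended-real-valued functional on probability measures. -/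
def ConvexOnProb {Y : Type*} [MeasurableSpace Y] (f : ProbabilityMeasure Y → EReal) : Prop :=
  ∀ (σ₁ σ₂ τ : ProbabilityMeasure Y) (a b : ℝ≥0), a + b = 1 →
    (τ : Measure Y) = a • (σ₁ : Measure Y) + b • (σ₂ : Measure Y) →
    f τ ≤ ((a : ℝ) : EReal) * f σ₁ + ((b : ℝ) : EReal) * f σ₂

/-- The mixture `a • σ₁ + b • σ₂` of two probability measures. -/
def mixProb {Y : Type*} [MeasurableSpace Y] (σ₁ σ₂ : ProbabilityMeasure Y) (a b : ℝ≥0)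
    (hab : a + b = 1) : ProbabilityMeasure Y :=
  ⟨a • (σ₁ : Measure Y) + b • (σ₂ : Measure Y), ⟨by
    simp only [Measure.add_apply, Measure.smul_apply, measure_univ, ENNReal.smul_def, smul_eq_mul,
      mul_one]
    exact_mod_cast hab⟩⟩

theorem exists_finset_forall_abs_sub_lt {Y : Type*} [MetricSpace Y] [MeasurableSpace Y]
    [BorelSpace Y] {ν : ProbabilityMeasure Y} {U : Set (ProbabilityMeasure Y)}
    (hU : U ∈ 𝓝 ν) : ∃ (s : Finset C(Y, ℝ)) (δ : ℝ), 0 < δ ∧ ∀ σ : ProbabilityMeasure Y,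
      (∀ g ∈ s, |∫ y, g y ∂(σ : Measure Y) - ∫ y, g y ∂(ν : Measure Y)| < δ) → σ ∈ U := by
  set F : Filter (ProbabilityMeasure Y) := ⨅ g : C(Y, ℝ),
    comap (fun σ : ProbabilityMeasure Y => ∫ y, g y ∂(σ : Measure Y))
      (𝓝 (∫ y, g y ∂(ν : Measure Y)))
    with hF
  have hle : F ≤ 𝓝 ν := by
    have : Tendsto (fun σ : ProbabilityMeasure Y => σ) F (𝓝 ν) := by
      rw [ProbabilityMeasure.tendsto_iff_forall_integral_tendsto]
      intro g
      exact tendsto_iff_comap.2 (iInf_le _ g.toContinuousMap)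
    simpa [Tendsto] using this
  have hB : F.HasBasis (fun p : Set C(Y, ℝ) × (C(Y, ℝ) → ℝ) => p.1.Finite ∧ ∀ g ∈ p.1, 0 < p.2 g)
      (fun p => ⋂ g ∈ p.1, (fun σ : ProbabilityMeasure Y => ∫ y, g y ∂(σ : Measure Y)) ⁻¹'
        Metric.ball (∫ y, g y ∂(ν : Measure Y)) (p.2 g)) :=
    HasBasis.iInf' fun g => Metric.nhds_basis_ball.comap _
  obtain ⟨⟨I, ε⟩, ⟨hI, hε⟩, hsub⟩ := hB.mem_iff.1 (hle hU)
  simp only at hI hε hsub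
  obtain ⟨δ, hδ, hδε⟩ : ∃ δ : ℝ, 0 < δ ∧ ∀ g ∈ I, δ ≤ ε g := by
    have := (hI.eventually_all (l := 𝓝[>] (0:ℝ)) (p := fun g δ => δ ≤ ε g)).2 fun g hg =>
      mem_nhdsWithin_of_mem_nhds (Iic_mem_nhds (hε g hg))
    obtain ⟨δ, h1, h2⟩ := (this.and self_mem_nhdsWithin).exists
    exact ⟨δ, h2, h1⟩
  refine ⟨hI.toFinset, δ, hδ, fun σ hσ => hsub ?_⟩
  simp only [mem_iInter, mem_preimage, Metric.mem_ball, Real.dist_eq]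
  exact fun g hg => (hσ g (by simpa using hg)).trans_le (hδε g hg)

section

variable {Y : Type*} [MetricSpace Y] [CompactSpace Y] [MeasurableSpace Y] [BorelSpace Y]

theorem integrable_continuousMap_s18 (g : C(Y, ℝ)) (σ : Measure Y) [IsFiniteMeasure σ] :
    Integrable g σ :=
  (BoundedContinuousFunction.mkOfCompact g).integrable σ

theorem continuous_integral_prob (g : C(Y, ℝ)) :
    Continuous fun σ : ProbabilityMeasure Y => ∫ y, g y ∂(σ : Measure Y) :=
  ProbabilityMeasure.continuous_integral_continuousMap g

theorem integral_mix (g : C(Y, ℝ)) {σ₁ σ₂ τ : ProbabilityMeasure Y} {a b : ℝ≥0}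
    (h : (τ : Measure Y) = a • (σ₁ : Measure Y) + b • (σ₂ : Measure Y)) :
    ∫ y, g y ∂(τ : Measure Y)
      = a * ∫ y, g y ∂(σ₁ : Measure Y) + b * ∫ y, g y ∂(σ₂ : Measure Y) := by
  rw [h, integral_add_measure (integrable_continuousMap_s18 g _) (integrable_continuousMap_s18 g _),
    integral_smul_nnreal_measure, integral_smul_nnreal_measure]
  rfl

/-- A weak* lower semicontinuous convex functional that is bounded below is the supremum of the
continuous linear functionals below it. -/
theorem exists_integral_le_of_lt {f : ProbabilityMeasure Y → EReal} (hconv : ConvexOnProb f)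
    (hlsc : LowerSemicontinuous f) {m : ℝ} (hm : ∀ σ, (m : EReal) ≤ f σ)
    {ν : ProbabilityMeasure Y} {t : ℝ} (ht : (t : EReal) < f ν) :
    ∃ g : C(Y, ℝ), (∀ σ : ProbabilityMeasure Y, ((∫ y, g y ∂(σ : Measure Y) : ℝ) : EReal) ≤ f σ) ∧
      t ≤ ∫ y, g y ∂(ν : Measure Y) := by
  classical
  obtain ⟨s, δ, hδ, hs⟩ := exists_finset_forall_abs_sub_lt (hlsc ν t ht)
  set Φ : ProbabilityMeasure Y → (s → ℝ) := fun σ g =>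
    ∫ y, g.1 y ∂(σ : Measure Y) - ∫ y, g.1 y ∂(ν : Measure Y) with hΦ
  suffices H : ∃ (k : ℝ) (B : (s → ℝ) →ₗ[ℝ] ℝ), (∀ σ, ((k + B (Φ σ) : ℝ) : EReal) ≤ f σ) ∧ t ≤ k by
    obtain ⟨k, B, hB, hk⟩ := H
    set b : s → ℝ := fun i => B fun j => if i = j then 1 else 0 with hb
    have hBs : ∀ w, B w = ∑ i, w i * b i := fun w =>
      B.pi_apply_eq_sum_univ w
    set g : C(Y, ℝ) := ContinuousMap.const Y (k - ∑ i, (∫ y, i.1 y ∂(ν : Measure Y)) * b i)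
      + ∑ i : s, b i • i.1 with hg
    have hgB : ∀ σ : ProbabilityMeasure Y, ∫ y, g y ∂(σ : Measure Y) = k + B (Φ σ) := by
      intro σ
      have : ∀ y, g y = (k - ∑ i, (∫ y, i.1 y ∂(ν : Measure Y)) * b i) + ∑ i : s, i.1 y * b i := by
        intro y
        simp [hg, ContinuousMap.sum_apply, mul_comm]
      simp only [this]
      rw [integral_add (integrable_const _)
        (integrable_finsetSum _ fun i _ => (integrable_continuousMap_s18 _ _).mul_const _),
        integral_finsetSum _ fun i _ => (integrable_continuousMap_s18 _ _).mul_const _, hBs]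
      simp only [integral_mul_const, integral_const, hΦ, sub_mul, Finset.sum_sub_distrib]
      simp
      ring
    refine ⟨g, fun σ => by rw [hgB]; exact hB σ, ?_⟩
    have h0 : Φ ν = 0 := by ext i; simp [hΦ]
    rw [hgB, h0, map_zero, add_zero]
    exact hk
  set U : Set ((s → ℝ) × ℝ) := {p | (∀ i, |p.1 i| < δ) ∧ p.2 < t} with hUdef
  set C : Set ((s → ℝ) × ℝ) := {p | ∃ σ, p.1 = Φ σ ∧ f σ ≤ (p.2 : EReal)} with hCdef
  have hUo : IsOpen U := by
    have : U = (⋂ i, {p : (s → ℝ) × ℝ | |p.1 i| < δ}) ∩ {p | p.2 < t} := by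
      ext p; simp [hUdef]
    rw [this]
    exact (isOpen_iInter_of_finite fun i => isOpen_lt (by fun_prop) continuous_const).inter
      (isOpen_lt continuous_snd continuous_const)
  have hUc : Convex ℝ U := by
    have : U = (Set.univ.pi fun _ => Metric.ball (0 : ℝ) δ) ×ˢ Iio t := by
      ext p; simp [hUdef]
    rw [this]
    exact (convex_pi fun i _ => convex_ball _ _).prod (convex_Iio _)
  have hCc : Convex ℝ C := by
    rintro ⟨w₁, r₁⟩ ⟨σ₁, h₁, hr₁⟩ ⟨w₂, r₂⟩ ⟨σ₂, h₂, hr₂⟩ a b ha hb hab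
    simp only at h₁ h₂ hr₁ hr₂
    lift a to ℝ≥0 using ha
    lift b to ℝ≥0 using hb
    have hab' : a + b = 1 := by exact_mod_cast hab
    refine ⟨mixProb σ₁ σ₂ a b hab', ?_, ?_⟩
    · ext i
      have := integral_mix i.1 (τ := mixProb σ₁ σ₂ a b hab') (σ₁ := σ₁) (σ₂ := σ₂) rfl
      simp only [hΦ, this, Prod.smul_mk, Prod.mk_add_mk, h₁, h₂, Pi.add_apply, Pi.smul_apply,
        smul_eq_mul]
      linear_combination (-(∫ y, i.1 y ∂(ν : Measure Y))) * hab
    · refine (hconv σ₁ σ₂ _ a b hab' rfl).trans ?_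
      simp only [Prod.smul_mk, Prod.mk_add_mk, smul_eq_mul, EReal.coe_add, EReal.coe_mul]
      exact add_le_add (mul_le_mul_of_nonneg_left hr₁ (EReal.coe_nonneg.2 a.2))
        (mul_le_mul_of_nonneg_left hr₂ (EReal.coe_nonneg.2 b.2))
  have hdisj : Disjoint U C := by
    rw [Set.disjoint_left]
    rintro ⟨w, r⟩ ⟨h1, h2⟩ ⟨σ, h3, h4⟩
    simp only at h1 h2 h3 h4
    have : (t : EReal) < f σ := hs σ fun g hg => by simpa [h3] using h1 ⟨g, hg⟩
    exact absurd (this.trans_le h4) (not_lt.2 (EReal.coe_le_coe_iff.2 h2.le))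
  obtain ⟨L, u, hLU, hLC⟩ := geometric_hahn_banach_open hUc hUo hCc hdisj
  set A : (s → ℝ) →ₗ[ℝ] ℝ := L.toLinearMap ∘ₗ LinearMap.inl ℝ _ _ with hA
  set β : ℝ := L (0, 1) with hβ
  have hL : ∀ w r, L (w, r) = A w + r * β := by
    intro w r
    have : ((w, r) : (s → ℝ) × ℝ) = (w, 0) + r • (0, 1) := by simp
    rw [this, map_add, map_smul]; rfl
  have hU0 : ∀ r < t, r * β < u := fun r hr => by
    simpa [hL] using hLU (0, r) ⟨fun i => by simpa using hδ, hr⟩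
  have hC0 : ∀ σ (r : ℝ), f σ ≤ r → u ≤ A (Φ σ) + r * β := fun σ r hr => by
    simpa [hL] using hLC (Φ σ, r) ⟨σ, rfl, hr⟩
  have hβ0 : 0 ≤ β := by
    by_contra! hneg
    have h1 := hU0 (min (t - 1) (u / β)) ((min_le_left _ _).trans_lt (by linarith))
    have h2 : u / β * β ≤ min (t - 1) (u / β) * β :=
      mul_le_mul_of_nonpos_right (min_le_right _ _) hneg.le
    rw [div_mul_cancel₀ _ hneg.ne] at h2
    linarith
  have hreal : ∀ (P : ProbabilityMeasure Y → ℝ), (∀ σ (r : ℝ), f σ = r → P σ ≤ r) →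
      ∀ σ, (P σ : EReal) ≤ f σ := by
    intro P hP σ
    have h1 := hP σ
    have h2 := hm σ
    induction h : f σ with
    | bot => rw [h] at h2; simp at h2
    | top => exact le_top
    | coe r => exact EReal.coe_le_coe_iff.2 (h1 r h)
  rcases hβ0.eq_or_lt with hβ0 | hβ0
  · have hu : 0 < u := by simpa [← hβ0] using hU0 (t - 1) (by linarith)
    set l : ℝ := max 0 ((t - m) / u) with hl
    have hl0 : 0 ≤ l := le_max_left _ _
    have hlu : t - m ≤ l * u := by
      have := mul_le_mul_of_nonneg_right (le_max_right 0 ((t - m) / u)) hu.le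
      rwa [div_mul_cancel₀ _ hu.ne'] at this
    refine ⟨m + l * u, -(l • A), hreal _ fun σ r hr => ?_, by linarith⟩
    have h1 := hC0 σ r hr.le
    rw [← hβ0, mul_zero, add_zero] at h1
    have h2 : m ≤ r := EReal.coe_le_coe_iff.1 (hr ▸ hm σ)
    have h3 := mul_le_mul_of_nonneg_left h1 hl0
    simp only [LinearMap.neg_apply, LinearMap.smul_apply, smul_eq_mul]
    linarith
  · have hu : t * β ≤ u := by
      by_contra! hlt
      have h1 : u / β < t := (div_lt_iff₀ hβ0).2 hlt
      have := hU0 _ h1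
      rw [div_mul_cancel₀ _ hβ0.ne'] at this
      exact lt_irrefl _ this
    refine ⟨t, -(β⁻¹ • A), hreal _ fun σ r hr => ?_, le_rfl⟩
    have h1 := hC0 σ r hr.le
    simp only [LinearMap.neg_apply, LinearMap.smul_apply, smul_eq_mul]
    have h2 : (t - r) * β ≤ A (Φ σ) := by linarith
    have h3 := (le_div_iff₀ hβ0).2 h2
    rw [div_eq_inv_mul] at h3
    linarith

end

/-- The minimizers of `h x` over `K x`. -/
def argminSet {X S : Type*} (K : X → Set S) (h : X → S → EReal) (x : X) : Set S :=
  {s ∈ K x | ∀ s' ∈ K x, h x s ≤ h x s'}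

theorem argminSet_subset {X S : Type*} (K : X → Set S) (h : X → S → EReal) (x : X) :
    argminSet K h x ⊆ K x :=
  fun _ hs => hs.1

section

variable {X S : Type*} [TopologicalSpace S]

theorem isClosed_argminSet {K : X → Set S} {h : X → S → EReal} {x : X} (hK : IsClosed (K x))
    (hh : LowerSemicontinuous (h x)) : IsClosed (argminSet K h x) := by
  have : argminSet K h x = K x ∩ ⋂ s' ∈ K x, h x ⁻¹' Iic (h x s') := by
    ext s; simp [argminSet]
  rw [this]
  exact hK.inter (isClosed_biInter fun s' _ =>
    lowerSemicontinuous_iff_isClosed_preimage.1 hh _)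

theorem argminSet_inter_nonempty_iff [CompactSpace S] {K : X → Set S} {h : X → S → EReal} {x : X}
    (hK : IsClosed (K x)) (hh : LowerSemicontinuous (h x)) {C : Set S} (hC : IsClosed C) :
    (argminSet K h x ∩ C).Nonempty ↔ (K x ∩ C).Nonempty ∧ ∀ q : ℚ,
      (K x ∩ h x ⁻¹' Iic ((q : ℝ) : EReal)).Nonempty →
      (K x ∩ h x ⁻¹' Iic ((q : ℝ) : EReal) ∩ C).Nonempty := by
  constructor
  · rintro ⟨s, ⟨hs, hmin⟩, hsC⟩
    exact ⟨⟨s, hs, hsC⟩, fun q ⟨s', hs', hq⟩ => ⟨s, ⟨hs, (hmin s' hs').trans hq⟩, hsC⟩⟩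
  · rintro ⟨⟨s₀, hs₀, hs₀C⟩, hq⟩
    set Q := {q : ℚ | (K x ∩ h x ⁻¹' Iic ((q : ℝ) : EReal)).Nonempty} with hQ
    have hlt : ∀ a b : EReal, a < b → ∃ q : ℚ, a < ((q : ℝ) : EReal) ∧ ((q : ℝ) : EReal) < b :=
      fun a b => EReal.lt_iff_exists_rat_btwn.1
    rcases isEmpty_or_nonempty Q with hE | hE
    · have htop : ∀ s ∈ K x, h x s = ⊤ := by
        intro s hs
        by_contra hne
        obtain ⟨q, hq1, -⟩ := hlt _ _ (lt_top_iff_ne_top.2 hne)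
        exact hE.false ⟨q, s, hs, hq1.le⟩
      exact ⟨s₀, ⟨hs₀, fun s' hs' => by rw [htop s' hs']; exact le_top⟩, hs₀C⟩
    · have hcl : ∀ q : Q, IsClosed (K x ∩ h x ⁻¹' Iic ((q.1 : ℝ) : EReal) ∩ C) := fun q =>
        (hK.inter (lowerSemicontinuous_iff_isClosed_preimage.1 hh _)).inter hC
      obtain ⟨s, hs⟩ := IsCompact.nonempty_iInter_of_directed_nonempty_isCompact_isClosed
        (fun q : Q => K x ∩ h x ⁻¹' Iic ((q.1 : ℝ) : EReal) ∩ C)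
        (Monotone.directed_ge fun p q hpq => inter_subset_inter_left _
          (inter_subset_inter_right _ (preimage_mono (Iic_subset_Iic.2
            (EReal.coe_le_coe_iff.2 (Rat.cast_le.2 hpq))))))
        (fun q => hq q.1 q.2) (fun q => (hcl q).isCompact) hcl
      rw [mem_iInter] at hs
      obtain ⟨q₀⟩ := hE
      refine ⟨s, ⟨(hs q₀).1.1, fun s' hs' => ?_⟩, (hs q₀).2⟩
      by_contra! hcon
      obtain ⟨q, hq1, hq2⟩ := hlt _ _ hcon
      exact absurd ((hs ⟨q, s', hs', hq1.le⟩).1.2) (not_le.2 hq2)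

theorem measurableSet_argminSet_inter_nonempty [MeasurableSpace X] [CompactSpace S]
    {K : X → Set S} {h : X → S → EReal} (hK : ∀ x, IsClosed (K x))
    (hKm : ∀ C, IsClosed C → MeasurableSet {x | (K x ∩ C).Nonempty})
    (hh : ∀ x, LowerSemicontinuous (h x))
    (hhm : ∀ (q : ℚ) (C : Set S), IsClosed C →
      MeasurableSet {x | (K x ∩ h x ⁻¹' Iic ((q : ℝ) : EReal) ∩ C).Nonempty})
    {C : Set S} (hC : IsClosed C) :
    MeasurableSet {x | (argminSet K h x ∩ C).Nonempty} := by
  simp only [argminSet_inter_nonempty_iff (hK _) (hh _) hC, ofPred_and, ofPred_forall]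
  refine MeasurableSet.inter (hKm C hC) ?_
  refine MeasurableSet.iInter fun q => ?_
  have h1 := hhm q univ isClosed_univ
  simp only [inter_univ] at h1
  exact h1.imp (hhm q C hC)

/-- A closed-valued map with a compact target admits a measurable selection of minimizers. -/
theorem exists_measurable_argmin [MeasurableSpace X] [CompactSpace S] [Nonempty S]
    {h : X → S → EReal} (hh : ∀ x, LowerSemicontinuous (h x))
    (hhm : ∀ (q : ℚ) (C : Set S), IsClosed C →
      MeasurableSet {x | (h x ⁻¹' Iic ((q : ℝ) : EReal) ∩ C).Nonempty})
    {e : ℕ → S → ℝ} (he : ∀ n, Continuous (e n))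
    (hsep : ∀ s s', (∀ n, e n s = e n s') → s = s') :
    ∃ ξ : X → S, (∀ x s, h x (ξ x) ≤ h x s) ∧
      ∀ C, IsClosed C → MeasurableSet (ξ ⁻¹' C) := by
  set E : ℕ → X → S → EReal := fun n _ s => ((e n s : ℝ) : EReal) with hE
  have hElsc : ∀ n x, LowerSemicontinuous (E n x) := fun n x =>
    (continuous_coe_real_ereal.comp (he n)).lowerSemicontinuous
  let K : ℕ → X → Set S := fun n =>
    Nat.rec (argminSet (fun _ => univ) h) (fun n K => argminSet K (E n)) n
  have hK : ∀ n, (∀ x, IsClosed (K n x)) ∧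
      ∀ C, IsClosed C → MeasurableSet {x | (K n x ∩ C).Nonempty} := by
    intro n
    induction n with
    | zero =>
      refine ⟨fun x => isClosed_argminSet isClosed_univ (hh x), fun C hC => ?_⟩
      refine measurableSet_argminSet_inter_nonempty (fun _ => isClosed_univ)
        (fun C _ => MeasurableSet.const _) hh (fun q C hC => ?_) hC
      simpa only [univ_inter] using hhm q C hC
    | succ n ih =>
      refine ⟨fun x => isClosed_argminSet (ih.1 x) (hElsc n x), fun C hC => ?_⟩
      refine measurableSet_argminSet_inter_nonempty ih.1 ih.2 (hElsc n) (fun q C hC => ?_) hC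
      simp only [inter_assoc]
      exact ih.2 _ ((lowerSemicontinuous_iff_isClosed_preimage.1
        ((continuous_coe_real_ereal.comp (he n)).lowerSemicontinuous) _).inter hC)
  have hne : ∀ n x, (K n x).Nonempty := by
    intro n x
    induction n with
    | zero =>
      have := (argminSet_inter_nonempty_iff (K := fun _ => univ) (x := x) isClosed_univ (hh x)
        isClosed_univ).2 ⟨by simp, fun q hq => by simpa using hq⟩
      rwa [inter_univ] at this
    | succ n ih =>
      have := (argminSet_inter_nonempty_iff (K := K n) (x := x) ((hK n).1 x) (hElsc n x)
        isClosed_univ).2 ⟨by simpa using ih, fun q hq => by simpa using hq⟩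
      simpa using this
  have hanti : ∀ x, Antitone fun n => K n x := fun x =>
    antitone_nat_of_succ_le fun n => argminSet_subset _ _ _
  have hinter : ∀ x C, IsClosed C → (∀ n, (K n x ∩ C).Nonempty) → ∃ s ∈ C, ∀ n, s ∈ K n x := by
    intro x C hC hn
    have hcl : ∀ n, IsClosed (K n x ∩ C) := fun n => ((hK n).1 x).inter hC
    obtain ⟨s, hs⟩ := IsCompact.nonempty_iInter_of_directed_nonempty_isCompact_isClosed
      (fun n => K n x ∩ C)
      (Antitone.directed_ge fun i j hij => inter_subset_inter_left _ (hanti x hij)) hn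
      (fun n => (hcl n).isCompact) hcl
    rw [mem_iInter] at hs
    exact ⟨s, (hs 0).2, fun n => (hs n).1⟩
  have huniq : ∀ x s s', (∀ n, s ∈ K n x) → (∀ n, s' ∈ K n x) → s = s' := by
    intro x s s' hs hs'
    refine hsep s s' fun n => le_antisymm ?_ ?_
    · exact EReal.coe_le_coe_iff.1 ((hs (n + 1)).2 s' (hs' n))
    · exact EReal.coe_le_coe_iff.1 ((hs' (n + 1)).2 s (hs n))
  choose ξ _ hξ using fun x => hinter x univ isClosed_univ fun n => by simpa using hne n x
  refine ⟨ξ, fun x s => (hξ x 0).2 s trivial, fun C hC => ?_⟩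
  have : ξ ⁻¹' C = ⋂ n, {x | (K n x ∩ C).Nonempty} := by
    ext x
    simp only [mem_preimage, mem_iInter, mem_ofPred_eq]
    refine ⟨fun hx n => ⟨ξ x, hξ x n, hx⟩, fun hx => ?_⟩
    obtain ⟨s, hsC, hs⟩ := hinter x C hC hx
    rwa [huniq x _ _ (hξ x) hs]
  rw [this]
  exact MeasurableSet.iInter fun n => (hK n).2 C hC

end

theorem isClosed_setOf_nonempty_Iic_inter {X S : Type*} [TopologicalSpace X] [TopologicalSpace S]
    [CompactSpace S] {h : X → S → EReal} (hh : LowerSemicontinuous fun p : X × S => h p.1 p.2)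
    (y : EReal) {C : Set S} (hC : IsClosed C) : IsClosed {x | (h x ⁻¹' Iic y ∩ C).Nonempty} := by
  have h1 : IsClosed ((fun p : X × S => h p.1 p.2) ⁻¹' Iic y ∩ Prod.snd ⁻¹' C) :=
    (lowerSemicontinuous_iff_isClosed_preimage.1 hh y).inter (hC.preimage continuous_snd)
  convert isClosedMap_fst_of_compactSpace _ h1 using 1
  ext x
  simp [Set.Nonempty, and_assoc]

theorem LowerSemicontinuous.add_coe {S : Type*} [TopologicalSpace S] {f : S → EReal} {u : S → ℝ}
    (hf : LowerSemicontinuous f) (hu : Continuous u) :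
    LowerSemicontinuous fun s => f s + (u s : EReal) :=
  hf.add' (continuous_coe_real_ereal.comp hu).lowerSemicontinuous fun _ =>
    EReal.continuousAt_add (Or.inr (EReal.coe_ne_bot _)) (Or.inr (EReal.coe_ne_top _))

theorem measurable_toMeasure_of_isClosed {X Y : Type*} [MeasurableSpace X]
    [MetricSpace Y] [CompactSpace Y] [MeasurableSpace Y] [BorelSpace Y]
    {ξ : X → ProbabilityMeasure Y} (hξ : ∀ C, IsClosed C → MeasurableSet (ξ ⁻¹' C)) :
    Measurable fun x => (ξ x : Measure Y) := by
  have hcont : ∀ {f : ProbabilityMeasure Y → ℝ≥0∞}, Continuous f → Measurable fun x => f (ξ x) :=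
    fun {f} hf => measurable_of_isClosed fun F hF => hξ _ (hF.preimage hf)
  refine Measurable.measure_of_isPiSystem_of_isProbabilityMeasure
    (BorelSpace.measurable_eq.trans borel_eq_generateFrom_isClosed) isPiSystem_isClosed ?_
  intro F hF
  have hF' : IsClosed F := hF
  refine measurable_of_tendsto_metrizable (f := fun n x => ∫⁻ y, hF'.apprSeq n y ∂(ξ x : Measure Y))
    (fun n => hcont (f := fun σ => ∫⁻ y, hF'.apprSeq n y ∂(σ : Measure Y)) ?_) ?_
  · exact ProbabilityMeasure.continuous_lintegral_boundedContinuousFunction _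
  · exact tendsto_pi_nhds.2 fun x => HasOuterApproxClosed.tendsto_lintegral_apprSeq hF' _

section

variable {X Y : Type*} [TopologicalSpace X] [MeasurableSpace X] [BorelSpace X]
  [MetricSpace Y] [CompactSpace Y] [MeasurableSpace Y] [BorelSpace Y]

/-- A cost `c(x,σ)` that is bounded below by `m`, jointly lower semicontinuous, proper and convex
in `σ`. -/
structure IsWeakCost (c : X → ProbabilityMeasure Y → EReal) (m : ℝ) : Prop where
  le : ∀ x σ, (m : EReal) ≤ c x σ
  proper : ∀ x, ∃ σ, c x σ ≠ ⊤
  lsc : LowerSemicontinuous fun p : X × ProbabilityMeasure Y => c p.1 p.2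
  convex : ∀ x, ConvexOnProb (c x)

variable {c : X → ProbabilityMeasure Y → EReal} {m : ℝ}

theorem abs_integral_sub_le (g g' : C(Y, ℝ)) (σ : ProbabilityMeasure Y) :
    |∫ y, g y ∂(σ : Measure Y) - ∫ y, g' y ∂(σ : Measure Y)| ≤ dist g g' := by
  rw [← integral_sub (integrable_continuousMap_s18 g _) (integrable_continuousMap_s18 g' _)]
  have := norm_integral_le_of_norm_le_const (μ := (σ : Measure Y)) (f := fun y => g y - g' y)
    (C := dist g g') (ae_of_all _ fun y => by
      rw [← dist_eq_norm]; exact ContinuousMap.dist_apply_le_dist y)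
  simpa using this

theorem continuous_integral_continuousMap (σ : ProbabilityMeasure Y) :
    Continuous fun g : C(Y, ℝ) => ∫ y, g y ∂(σ : Measure Y) :=
  (LipschitzWith.of_dist_le' (K := 1) fun g g' => by
    rw [one_mul, Real.dist_eq]; exact abs_integral_sub_le g g' σ).continuous

theorem prob_eq_of_forall_denseSeq {σ τ : ProbabilityMeasure Y}
    (h : ∀ n, ∫ y, TopologicalSpace.denseSeq C(Y, ℝ) n y ∂(σ : Measure Y) =
      ∫ y, TopologicalSpace.denseSeq C(Y, ℝ) n y ∂(τ : Measure Y)) : σ = τ := by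
  have heq : (fun g : C(Y, ℝ) => ∫ y, g y ∂(σ : Measure Y)) = fun g => ∫ y, g y ∂(τ : Measure Y) :=
    (TopologicalSpace.denseRange_denseSeq C(Y, ℝ)).equalizer
      (continuous_integral_continuousMap σ) (continuous_integral_continuousMap τ) (funext h)
  exact ProbabilityMeasure.toMeasure_injective
    (ext_of_forall_integral_eq_of_IsFiniteMeasure fun f =>
      congrFun heq f.toContinuousMap)

/-- Measurable selection of maximizers in the definition of `costOp`, together with the
corresponding minimal value. -/
theorem IsWeakCost.exists_argmin (hc : IsWeakCost c m) (g : C(Y, ℝ)) :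
    ∃ ξ : X → ProbabilityMeasure Y, Measurable (fun x => (ξ x : Measure Y)) ∧
      Measurable (fun x => c x (ξ x) + ((-∫ y, g y ∂(ξ x : Measure Y) : ℝ) : EReal)) ∧
      ∀ x σ, c x (ξ x) + ((-∫ y, g y ∂(ξ x : Measure Y) : ℝ) : EReal) ≤
        c x σ + ((-∫ y, g y ∂(σ : Measure Y) : ℝ) : EReal) := by
  rcases isEmpty_or_nonempty X with hX | ⟨⟨x₀⟩⟩
  · exact ⟨fun x => (hX.false x).elim, measurable_of_empty _, measurable_of_empty _,
      fun x => (hX.false x).elim⟩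
  have : Nonempty (ProbabilityMeasure Y) := ⟨(hc.proper x₀).choose⟩
  set h : X → ProbabilityMeasure Y → EReal := fun x σ =>
    c x σ + ((-∫ y, g y ∂(σ : Measure Y) : ℝ) : EReal) with hh
  have hlsc : LowerSemicontinuous fun p : X × ProbabilityMeasure Y => h p.1 p.2 :=
    hc.lsc.add_coe ((continuous_integral_prob g).neg.comp continuous_snd)
  obtain ⟨ξ, hmin, hξ⟩ := exists_measurable_argmin (h := h)
    (fun x => hlsc.comp (Continuous.prodMk_right x))
    (fun q C hC => (isClosed_setOf_nonempty_Iic_inter hlsc _ hC).measurableSet)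
    (fun n => continuous_integral_prob (TopologicalSpace.denseSeq C(Y, ℝ) n))
    (fun s s' h => prob_eq_of_forall_denseSeq h)
  refine ⟨ξ, measurable_toMeasure_of_isClosed hξ, ?_, hmin⟩
  refine LowerSemicontinuous.measurable (lowerSemicontinuous_iff_isClosed_preimage.2 fun y => ?_)
  convert isClosed_setOf_nonempty_Iic_inter hlsc y isClosed_univ using 1
  ext x
  simp only [inter_univ, mem_preimage, mem_Iic, mem_ofPred_eq]
  exact ⟨fun hx => ⟨ξ x, hx⟩, fun ⟨σ, hσ⟩ => (hmin x σ).trans hσ⟩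

end

theorem EReal.coe_sub_eq_neg_add (r : ℝ) (z : EReal) :
    (r : EReal) - z = -(z + ((-r : ℝ) : EReal)) := by
  rw [EReal.neg_add (Or.inr (EReal.coe_ne_top _)) (Or.inr (EReal.coe_ne_bot _)), EReal.coe_neg,
    sub_eq_add_neg, sub_eq_add_neg, neg_neg, add_comm]

theorem costOp_eq_neg {X Y : Type*} [TopologicalSpace Y] [MeasurableSpace Y]
    {c : X → ProbabilityMeasure Y → EReal} {g : C(Y, ℝ)} {x : X} {ξ : ProbabilityMeasure Y}
    (h : ∀ σ : ProbabilityMeasure Y, c x ξ + ((-∫ y, g y ∂(ξ : Measure Y) : ℝ) : EReal) ≤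
      c x σ + ((-∫ y, g y ∂(σ : Measure Y) : ℝ) : EReal)) :
    costOp c g x = -(c x ξ + ((-∫ y, g y ∂(ξ : Measure Y) : ℝ) : EReal)) := by
  simp only [costOp, EReal.coe_sub_eq_neg_add]
  exact le_antisymm (iSup_le fun σ => EReal.neg_le_neg_iff.2 (h σ)) (le_iSup (fun σ =>
    -(c x σ + ((-∫ y, g y ∂(σ : Measure Y) : ℝ) : EReal))) ξ)

theorem abs_integral_le_norm {Y : Type*} [MetricSpace Y] [CompactSpace Y] [MeasurableSpace Y]
    [BorelSpace Y] (g : C(Y, ℝ)) (σ : ProbabilityMeasure Y) :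
    |∫ y, g y ∂(σ : Measure Y)| ≤ ‖g‖ := by
  simpa using abs_integral_sub_le g 0 σ

/-- A measurable family of probability measures, as a Markov kernel. -/
def probKernel {X Y : Type*} [MeasurableSpace X] [MeasurableSpace Y] (κ : X → ProbabilityMeasure Y)
    (hκ : Measurable fun x => (κ x : Measure Y)) : ProbabilityTheory.Kernel X Y :=
  ⟨fun x => (κ x : Measure Y), hκ⟩

instance {X Y : Type*} [MeasurableSpace X] [MeasurableSpace Y] (κ : X → ProbabilityMeasure Y)
    (hκ : Measurable fun x => (κ x : Measure Y)) :
    ProbabilityTheory.IsMarkovKernel (probKernel κ hκ) :=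
  ⟨fun x => (κ x).2⟩

theorem measurable_integral_prob {X Y : Type*} [MeasurableSpace X] [MeasurableSpace Y]
    {κ : X → ProbabilityMeasure Y} (hκ : Measurable fun x => (κ x : Measure Y))
    {f : X × Y → ℝ} (hf : Measurable f) : Measurable fun x => ∫ y, f (x, y) ∂(κ x : Measure Y) :=
  (hf.stronglyMeasurable.integral_kernel_prod_right' (κ := probKernel κ hκ)).measurable

section

variable {X Y : Type*} [TopologicalSpace X] [MeasurableSpace X] [BorelSpace X]
  [MetricSpace Y] [CompactSpace Y] [MeasurableSpace Y] [BorelSpace Y]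
  {c : X → ProbabilityMeasure Y → EReal} {m : ℝ}

/-- A weak cost is a countable supremum of functions that are affine in the measure. -/
theorem IsWeakCost.exists_eq_iSup (hc : IsWeakCost c m) :
    ∃ (g : ℕ → C(Y, ℝ)) (a : ℕ → X → ℝ), (∀ k, Measurable (a k)) ∧
      (∀ k, ∃ C, ∀ x, |a k x| ≤ C) ∧
      ∀ x σ, c x σ = ⨆ k, ((∫ y, g k y ∂(σ : Measure Y) - a k x : ℝ) : EReal) := by
  set g : ℕ → C(Y, ℝ) := TopologicalSpace.denseSeq C(Y, ℝ) with hg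
  choose ξ _ hS hmin using fun k => hc.exists_argmin (g k)
  set S : ℕ → X → EReal := fun k x =>
    c x (ξ k x) + ((-∫ y, g k y ∂(ξ k x : Measure Y) : ℝ) : EReal) with hSdef
  have hlow : ∀ k x, ((m - ‖g k‖ : ℝ) : EReal) ≤ S k x := fun k x => by
    rw [sub_eq_add_neg, EReal.coe_add]
    exact add_le_add (hc.le _ _) (EReal.coe_le_coe_iff.2
      (neg_le_neg ((le_abs_self _).trans (abs_integral_le_norm _ _))))
  have hbot : ∀ k x, S k x ≠ ⊥ := fun k x =>
    ne_bot_of_le_ne_bot (EReal.coe_ne_bot _) (hlow k x)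
  have htop : ∀ k x, S k x ≠ ⊤ := fun k x => by
    obtain ⟨σ, hσ⟩ := hc.proper x
    refine ne_top_of_le_ne_top ?_ (hmin k x σ)
    exact EReal.add_ne_top hσ (EReal.coe_ne_top _)
  have hreal : ∀ k x, ((S k x).toReal : EReal) = S k x := fun k x =>
    EReal.coe_toReal (htop k x) (hbot k x)
  refine ⟨g, fun k x => max 0 (-(S k x).toReal), fun k => ?_, fun k => ⟨‖g k‖ + |m|, fun x => ?_⟩,
    fun x σ => le_antisymm (le_of_forall_lt fun t' ht' => ?_) (iSup_le fun k => ?_)⟩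
  · exact measurable_const.max (hS k).ereal_toReal.neg
  · have h1 : m - ‖g k‖ ≤ (S k x).toReal := by
      rw [← EReal.coe_le_coe_iff, hreal]; exact hlow k x
    rw [abs_of_nonneg (le_max_left _ _)]
    exact max_le (by positivity) (by linarith [neg_abs_le m])
  · obtain ⟨t, ht1, ht2⟩ := EReal.lt_iff_exists_real_btwn.1 ht'
    obtain ⟨s, hs1, hs2⟩ := EReal.lt_iff_exists_real_btwn.1 ht2
    have hts : t < s := EReal.coe_lt_coe_iff.1 hs1
    obtain ⟨f, hf, hfs⟩ := exists_integral_le_of_lt (hc.convex x)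
      (hc.lsc.comp (Continuous.prodMk_right x)) (hc.le x) hs2
    set ε : ℝ := (s - t) / 2 with hε
    have hε0 : 0 < ε := by rw [hε]; linarith
    obtain ⟨k, hk⟩ := (TopologicalSpace.denseRange_denseSeq C(Y, ℝ)).exists_dist_lt
      (f - ContinuousMap.const Y ε) hε0
    have hclose : ∀ τ : ProbabilityMeasure Y,
        |∫ y, f y ∂(τ : Measure Y) - ε - ∫ y, g k y ∂(τ : Measure Y)| < ε := by
      intro τ
      have h1 : ∫ y, (f - ContinuousMap.const Y ε) y ∂(τ : Measure Y) =
          ∫ y, f y ∂(τ : Measure Y) - ε := by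
        simp only [ContinuousMap.sub_apply, ContinuousMap.const_apply]
        rw [integral_sub (integrable_continuousMap_s18 f _) (integrable_const _)]
        simp
      rw [← h1]
      exact (abs_integral_sub_le _ _ τ).trans_lt hk
    have hS0 : 0 ≤ (S k x).toReal := by
      rw [← EReal.coe_le_coe_iff, hreal]
      have h2 : ((∫ y, g k y ∂(ξ k x : Measure Y) : ℝ) : EReal) ≤ c x (ξ k x) :=
        (EReal.coe_le_coe_iff.2 (by linarith [(abs_lt.1 (hclose (ξ k x))).1])).trans (hf (ξ k x))
      calc ((0 : ℝ) : EReal) = ((∫ y, g k y ∂(ξ k x : Measure Y) : ℝ) : EReal) +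
            ((-∫ y, g k y ∂(ξ k x : Measure Y) : ℝ) : EReal) := by
            rw [← EReal.coe_add, add_neg_cancel]
        _ ≤ S k x := add_le_add_left h2 _
    refine ht1.trans_le (le_trans ?_ (le_iSup _ k))
    have hmax : max 0 (-(S k x).toReal) = 0 := max_eq_left (by linarith)
    simp only [hmax, sub_zero]
    rw [EReal.coe_le_coe_iff]
    linarith [(abs_lt.1 (hclose σ)).2]
  · have h1 : S k x ≤ c x σ + ((-∫ y, g k y ∂(σ : Measure Y) : ℝ) : EReal) := hmin k x σ
    have h2 : ((∫ y, g k y ∂(σ : Measure Y) : ℝ) : EReal) + S k x ≤ c x σ := by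
      calc _ ≤ ((∫ y, g k y ∂(σ : Measure Y) : ℝ) : EReal) +
            (c x σ + ((-∫ y, g k y ∂(σ : Measure Y) : ℝ) : EReal)) := add_le_add_right h1 _
        _ = c x σ := by
          rw [add_left_comm, ← EReal.coe_add, add_neg_cancel, EReal.coe_zero, add_zero]
    refine le_trans ?_ h2
    rw [← hreal k x, ← EReal.coe_add, EReal.coe_le_coe_iff]
    linarith [le_max_right 0 (-(S k x).toReal)]

theorem IsWeakCost.measurable_comp (hc : IsWeakCost c m) {κ : X → ProbabilityMeasure Y}
    (hκ : Measurable fun x => (κ x : Measure Y)) : Measurable fun x => c x (κ x) := by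
  obtain ⟨g, a, ha, -, h⟩ := hc.exists_eq_iSup
  simp only [h]
  refine Measurable.iSup fun k => measurable_coe_real_ereal.comp ?_
  exact (measurable_integral_prob hκ ((g k).continuous.measurable.comp measurable_snd)).sub (ha k)

end

section

variable {X Y : Type*} [MeasurableSpace X] [MeasurableSpace Y] {μ : ProbabilityMeasure X}
  {π : ProbabilityMeasure (X × Y)} {κ : X → ProbabilityMeasure Y}

/-- The plan with first marginal `μ` and disintegration `κ`. -/
def planOf (μ : ProbabilityMeasure X) (κ : X → ProbabilityMeasure Y)
    (hκ : Measurable fun x => (κ x : Measure Y)) : ProbabilityMeasure (X × Y) :=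
  ⟨(μ : Measure X).compProd (probKernel κ hκ), inferInstance⟩

theorem isDisintegration_planOf (hκ : Measurable fun x => (κ x : Measure Y)) :
    IsDisintegration (planOf μ κ hκ) μ κ :=
  ⟨hκ, fun _ _ hA hB => Measure.compProd_apply_prod hA hB⟩

theorem IsDisintegration.eq_planOf (h : IsDisintegration π μ κ) : π = planOf μ κ h.1 := by
  refine ProbabilityMeasure.toMeasure_injective (Measure.ext_prod fun {s t} hs ht => ?_)
  rw [h.2 s t hs ht, (isDisintegration_planOf h.1).2 s t hs ht]

theorem IsDisintegration.map_fst (h : IsDisintegration π μ κ) :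
    (π : Measure (X × Y)).map Prod.fst = (μ : Measure X) := by
  rw [h.eq_planOf]
  exact Measure.fst_compProd _ _

theorem IsDisintegration.map_snd_apply (h : IsDisintegration π μ κ) {B : Set Y}
    (hB : MeasurableSet B) :
    (π : Measure (X × Y)).map Prod.snd B = ∫⁻ x, (κ x : Measure Y) B ∂(μ : Measure X) := by
  rw [Measure.map_apply measurable_snd hB, ← univ_prod, h.2 _ _ MeasurableSet.univ hB,
    Measure.restrict_univ]

theorem IsDisintegration.integral_eq (h : IsDisintegration π μ κ) {f : X × Y → ℝ}
    (hf : Integrable f (π : Measure (X × Y))) :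
    ∫ p, f p ∂(π : Measure (X × Y)) = ∫ x, ∫ y, f (x, y) ∂(κ x : Measure Y) ∂(μ : Measure X) := by
  have h1 : (π : Measure (X × Y)) = (μ : Measure X).compProd (probKernel κ h.1) :=
    congrArg _ h.eq_planOf
  rw [h1] at hf ⊢
  exact Measure.integral_compProd hf

theorem IsDisintegration.integral_snd_eq {ν : ProbabilityMeasure Y} (h : IsDisintegration π μ κ)
    (hν : (π : Measure (X × Y)).map Prod.snd = (ν : Measure Y)) {f : Y → ℝ} (hf : Measurable f)
    (hfi : Integrable f (ν : Measure Y)) :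
    ∫ y, f y ∂(ν : Measure Y) = ∫ x, ∫ y, f y ∂(κ x : Measure Y) ∂(μ : Measure X) := by
  rw [← hν] at hfi ⊢
  rw [integral_map measurable_snd.aemeasurable hf.aestronglyMeasurable]
  exact h.integral_eq (hfi.comp_measurable measurable_snd)

end

theorem integrable_of_forall_norm_le {α : Type*} [MeasurableSpace α] {ρ : Measure α}
    [IsFiniteMeasure ρ] {u : α → ℝ} {M : ℝ} (hu : Measurable u) (hM : ∀ z, ‖u z‖ ≤ M) :
    Integrable u ρ :=
  Integrable.of_bound hu.aestronglyMeasurable M (ae_of_all _ hM)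

theorem exists_measurable_isMaxOn_nat {X : Type*} [MeasurableSpace X] {φ : ℕ → X → ℝ}
    (hφ : ∀ k, Measurable (φ k)) (n : ℕ) :
    ∃ N : X → ℕ, Measurable N ∧ (∀ x, N x ≤ n) ∧ ∀ x, ∀ k ≤ n, φ k x ≤ φ (N x) x := by
  induction n with
  | zero => exact ⟨fun _ => 0, measurable_const, fun _ => le_rfl, fun x k hk => by
      rw [Nat.le_zero.1 hk]⟩
  | succ n ih =>
    obtain ⟨N, hN, hNn, hmax⟩ := ih
    have hm : Measurable fun x => φ (N x) x :=
      (measurable_from_prod_countable_right (f := fun p : ℕ × X => φ p.1 p.2) hφ).comp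
        (hN.prodMk measurable_id)
    refine ⟨fun x => if φ (N x) x ≤ φ (n + 1) x then n + 1 else N x,
      Measurable.ite (measurableSet_le hm (hφ _)) measurable_const hN, fun x => ?_,
      fun x k hk => ?_⟩
    · dsimp only
      split_ifs
      exacts [le_rfl, (hNn x).trans n.le_succ]
    · rcases Nat.le_succ_iff.1 hk with hk | rfl
      · dsimp only
        split_ifs with h
        exacts [(hmax x k hk).trans h, hmax x k hk]
      · dsimp only
        split_ifs with h
        exacts [le_rfl, (not_le.1 h).le]

section

variable {X Y : Type*} [MetricSpace X] [CompactSpace X] [MeasurableSpace X] [BorelSpace X]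
  [MetricSpace Y] [CompactSpace Y] [MeasurableSpace Y] [BorelSpace Y]
  {c : X → ProbabilityMeasure Y → EReal} {m : ℝ} {μ : ProbabilityMeasure X}

theorem continuousOn_integral_mul {b : X → ℝ} (hb : Measurable b)
    (hbi : Integrable b (μ : Measure X))
    (g : C(Y, ℝ)) :
    ContinuousOn (fun π : ProbabilityMeasure (X × Y) => ∫ p, b p.1 * g p.2 ∂(π : Measure (X × Y)))
      {π | (π : Measure (X × Y)).map Prod.fst = (μ : Measure X)} := by
  refine continuousOn_of_uniform_approx_of_continuousOn fun u hu => ?_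
  obtain ⟨ε, hε, hεu⟩ := Metric.mem_uniformity_dist.1 hu
  have hpos : 0 < ‖g‖ + 1 := by positivity
  obtain ⟨f, hf, hfi⟩ := hbi.exists_boundedContinuous_integral_sub_le (ε := ε / (2 * (‖g‖ + 1)))
    (by positivity)
  let F : C(X × Y, ℝ) := ⟨fun p => f p.1 * g p.2, by fun_prop⟩
  refine ⟨fun π => ∫ p, F p ∂(π : Measure (X × Y)), (continuous_integral_prob F).continuousOn,
    fun π hπ => hεu ?_⟩
  replace hπ : (π : Measure (X × Y)).map Prod.fst = (μ : Measure X) := hπ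
  have hcomp : ∀ {u : X → ℝ}, Integrable u (μ : Measure X) →
      Integrable (fun p : X × Y => u p.1) (π : Measure (X × Y)) := fun {u} hu => by
    rw [← hπ] at hu
    exact hu.comp_measurable measurable_fst
  have hbg : Integrable (fun p : X × Y => b p.1 * g p.2) (π : Measure (X × Y)) :=
    (hcomp hbi).mul_bdd (c := ‖g‖)
      (g.continuous.measurable.comp measurable_snd).aestronglyMeasurable
      (ae_of_all _ fun p => g.norm_coe_le_norm p.2)
  rw [Real.dist_eq, ← integral_sub hbg (integrable_continuousMap_s18 F _)]
  have hd : Integrable (fun p : X × Y => ‖b p.1 - f p.1‖ * ‖g‖) (π : Measure (X × Y)) :=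
    (hcomp (hbi.sub hfi)).norm.mul_const _
  calc |∫ p, (b p.1 * g p.2 - F p) ∂(π : Measure (X × Y))|
      ≤ ∫ p : X × Y, ‖b p.1 - f p.1‖ * ‖g‖ ∂(π : Measure (X × Y)) := by
        rw [← Real.norm_eq_abs]
        refine norm_integral_le_of_norm_le hd (ae_of_all _ fun p => ?_)
        have : b p.1 * g p.2 - F p = (b p.1 - f p.1) * g p.2 := by
          simp only [F, ContinuousMap.coe_mk]; ring
        rw [this, norm_mul]
        exact mul_le_mul_of_nonneg_left (g.norm_coe_le_norm p.2) (norm_nonneg _)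
    _ = (∫ x, ‖b x - f x‖ ∂(μ : Measure X)) * ‖g‖ := by
        rw [integral_mul_const, ← hπ, integral_map measurable_fst.aemeasurable]
        exact (hb.sub f.continuous.measurable).norm.aestronglyMeasurable
    _ ≤ ε / (2 * (‖g‖ + 1)) * ‖g‖ := mul_le_mul_of_nonneg_right hf (norm_nonneg _)
    _ < ε := by
        rw [div_mul_eq_mul_div, div_lt_iff₀ (by positivity)]
        nlinarith [norm_nonneg g]

theorem continuousOn_integral_selector {g : ℕ → C(Y, ℝ)} {a : ℕ → X → ℝ}
    (ha : ∀ k, Measurable (a k)) {C : ℕ → ℝ} (hC : ∀ k x, |a k x| ≤ C k) {N : X → ℕ}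
    (hN : Measurable N) {n : ℕ} (hNn : ∀ x, N x ≤ n) :
    ContinuousOn (fun π : ProbabilityMeasure (X × Y) =>
        ∫ p, (g (N p.1) p.2 - a (N p.1) p.1) ∂(π : Measure (X × Y)))
      {π | (π : Measure (X × Y)).map Prod.fst = (μ : Measure X)} := by
  let b : ℕ → X → ℝ := fun k => (N ⁻¹' {k}).indicator fun _ => 1
  have hbm : ∀ k, Measurable (b k) := fun k =>
    measurable_const.indicator (hN (measurableSet_singleton k))
  have hb1 : ∀ k x, ‖b k x‖ ≤ 1 := fun k x => by
    simpa using norm_indicator_le_norm_self (s := N ⁻¹' {k}) (fun _ => (1 : ℝ)) x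
  have hba : ∀ k x, ‖b k x * a k x‖ ≤ C k := fun k x => by
    rw [norm_mul]
    exact (mul_le_of_le_one_left (norm_nonneg _) (hb1 k x)).trans (hC k x)
  have h1 : ∀ k, ContinuousOn (fun π : ProbabilityMeasure (X × Y) =>
      ∫ p, b k p.1 * g k p.2 ∂(π : Measure (X × Y)))
      {π | (π : Measure (X × Y)).map Prod.fst = (μ : Measure X)} := fun k =>
    continuousOn_integral_mul (hbm k) (integrable_of_forall_norm_le (hbm k) (hb1 k)) (g k)
  have h2 : ∀ k, ContinuousOn (fun π : ProbabilityMeasure (X × Y) =>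
      ∫ p, (b k p.1 * a k p.1) * (1 : C(Y, ℝ)) p.2 ∂(π : Measure (X × Y)))
      {π | (π : Measure (X × Y)).map Prod.fst = (μ : Measure X)} := fun k =>
    continuousOn_integral_mul ((hbm k).mul (ha k))
      (integrable_of_forall_norm_le ((hbm k).mul (ha k)) (hba k)) 1
  have hi1 : ∀ (π : ProbabilityMeasure (X × Y)) k,
      Integrable (fun p : X × Y => b k p.1 * g k p.2) (π : Measure (X × Y)) := fun π k =>
    integrable_of_forall_norm_le (M := ‖g k‖) (((hbm k).comp measurable_fst).mul
      ((g k).continuous.measurable.comp measurable_snd)) fun p => by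
        rw [norm_mul]
        exact (mul_le_of_le_one_left (norm_nonneg _) (hb1 k p.1)).trans
          ((g k).norm_coe_le_norm p.2)
  have hi2 : ∀ (π : ProbabilityMeasure (X × Y)) k,
      Integrable (fun p : X × Y => (b k p.1 * a k p.1) * (1 : C(Y, ℝ)) p.2)
        (π : Measure (X × Y)) := fun π k =>
    integrable_of_forall_norm_le (M := C k) ((((hbm k).mul (ha k)).comp measurable_fst).mul
      ((1 : C(Y, ℝ)).continuous.measurable.comp measurable_snd)) fun p => by
        simpa using hba k p.1
  have hsum : ContinuousOn (fun π : ProbabilityMeasure (X × Y) =>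
      ∑ k ∈ Finset.range (n + 1), (∫ p, b k p.1 * g k p.2 ∂(π : Measure (X × Y)) -
        ∫ p, (b k p.1 * a k p.1) * (1 : C(Y, ℝ)) p.2 ∂(π : Measure (X × Y))))
      {π | (π : Measure (X × Y)).map Prod.fst = (μ : Measure X)} :=
    continuousOn_finsetSum (Finset.range (n + 1)) fun k _ => (h1 k).sub (h2 k)
  refine hsum.congr fun π _ => ?_
  simp only [← integral_sub (hi1 π _) (hi2 π _)]
  refine Eq.trans ?_ (integral_finsetSum _ fun k _ => (hi1 π k).sub (hi2 π k))
  refine integral_congr_ae (ae_of_all _ fun p => ?_)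
  dsimp only [Pi.sub_apply]
  rw [Finset.sum_eq_single_of_mem (N p.1)
    (Finset.mem_range.2 (Nat.lt_succ_of_le (hNn p.1))) fun k _ hk => by simp [b, hk.symm]]
  simp [b]

theorem IsWeakCost.eventually_lt_eint (hc : IsWeakCost c m) {π₀ : ProbabilityMeasure (X × Y)}
    {κ₀ : X → ProbabilityMeasure Y} (h₀ : IsDisintegration π₀ μ κ₀) {t : ℝ}
    (ht : (t : EReal) < eint (μ : Measure X) fun x => c x (κ₀ x)) :
    ∀ᶠ π in 𝓝[{π : ProbabilityMeasure (X × Y) |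
        (π : Measure (X × Y)).map Prod.fst = (μ : Measure X)}] π₀,
      ∀ κ, IsDisintegration π μ κ → (t : EReal) < eint (μ : Measure X) fun x => c x (κ x) := by
  obtain ⟨g, a, ha, hab, hrep⟩ := hc.exists_eq_iSup
  choose C hC using hab
  set φ : ℕ → X → ℝ := fun k x => ∫ y, g k y ∂(κ₀ x : Measure Y) - a k x with hφdef
  have hφ : ∀ k, Measurable (φ k) := fun k =>
    (measurable_integral_prob h₀.1 ((g k).continuous.measurable.comp measurable_snd)).sub (ha k)
  choose N hN hNn hNmax using exists_measurable_isMaxOn_nat hφ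
  have hφN : ∀ n, Measurable fun x => φ (N n x) x := fun n =>
    (measurable_from_prod_countable_right (f := fun p : ℕ × X => φ p.1 p.2) hφ).comp
      ((hN n).prodMk measurable_id)
  have hsup : ∀ x, ⨆ n, ((φ (N n x) x : ℝ) : EReal) = c x (κ₀ x) := fun x => by
    rw [hrep]
    exact le_antisymm (iSup_le fun n => le_iSup (fun k => ((φ k x : ℝ) : EReal)) (N n x))
      (iSup_mono fun n => EReal.coe_le_coe_iff.2 (hNmax n x n le_rfl))
  obtain ⟨n, hn⟩ : ∃ n, (t : EReal) <
      eint (μ : Measure X) fun x => ((φ (N n x) x : ℝ) : EReal) := by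
    refine exists_lt_eint_of_lt_eint_iSup (m := -‖g 0‖ - C 0)
      (f := fun n x => ((φ (N n x) x : ℝ) : EReal))
      (fun n => measurable_coe_real_ereal.comp (hφN n))
      (fun x i j hij => EReal.coe_le_coe_iff.2 (hNmax j x _ ((hNn i x).trans hij)))
      (fun x => EReal.coe_le_coe_iff.2 ?_) (by simpa only [hsup] using ht)
    rw [Nat.le_zero.1 (hNn 0 x)]
    exact sub_le_sub ((neg_le_neg (abs_integral_le_norm (g 0) (κ₀ x))).trans (neg_abs_le _))
      ((le_abs_self _).trans (hC 0 x))
  set ψ : X × Y → ℝ := fun p => g (N n p.1) p.2 - a (N n p.1) p.1 with hψdef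
  have hψ : Measurable ψ := by
    have h1 : Measurable fun q : ℕ × (X × Y) => g q.1 q.2.2 - a q.1 q.2.1 :=
      measurable_from_prod_countable_right fun k =>
        ((g k).continuous.measurable.comp measurable_snd).sub ((ha k).comp measurable_fst)
    exact h1.comp (((hN n).comp measurable_fst).prodMk measurable_id)
  set R : ℝ := ∑ k ∈ Finset.range (n + 1), (‖g k‖ + C k) with hR
  have hRk : ∀ k ≤ n, ‖g k‖ + C k ≤ R := by
    intro k hk
    rcases isEmpty_or_nonempty X with hX | ⟨⟨x⟩⟩
    · exact (hX.false (π₀ : Measure (X × Y)).nonempty_of_neZero.some.1).elim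
    · exact Finset.single_le_sum (f := fun k => ‖g k‖ + C k)
        (fun k _ => add_nonneg (norm_nonneg _) ((abs_nonneg _).trans (hC k x)))
        (Finset.mem_range.2 (Nat.lt_succ_of_le hk))
  have hψR : ∀ p, ‖ψ p‖ ≤ R := fun p =>
    (norm_sub_le _ _).trans <| le_trans (by gcongr; exacts [(g _).norm_coe_le_norm p.2, hC _ p.1])
      (hRk _ (hNn n p.1))
  have hψi : ∀ π : ProbabilityMeasure (X × Y), Integrable ψ (π : Measure (X × Y)) := fun π =>
    Integrable.of_bound hψ.aestronglyMeasurable R (ae_of_all _ hψR)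
  have hψint : ∀ (κ : X → ProbabilityMeasure Y) x, ∫ y, ψ (x, y) ∂(κ x : Measure Y) =
      ∫ y, g (N n x) y ∂(κ x : Measure Y) - a (N n x) x := fun κ x => by
    simp only [ψ]
    rw [integral_sub (integrable_continuousMap_s18 _ _) (integrable_const _)]
    simp
  have heint : ∀ {π : ProbabilityMeasure (X × Y)} {κ}, IsDisintegration π μ κ →
      eint (μ : Measure X) (fun x => ((∫ y, ψ (x, y) ∂(κ x : Measure Y) : ℝ) : EReal)) =
        ((∫ p, ψ p ∂(π : Measure (X × Y)) : ℝ) : EReal) := fun {π κ} h => by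
    have hm := measurable_integral_prob h.1 hψ
    rw [h.integral_eq (hψi π), eint_coe hm]
    refine Integrable.of_bound hm.aestronglyMeasurable R (ae_of_all _ fun x => ?_)
    simpa using norm_integral_le_of_norm_le_const (μ := (κ x : Measure Y))
      (ae_of_all _ fun y => hψR (x, y))
  have hcont : ContinuousOn (fun π : ProbabilityMeasure (X × Y) => ∫ p, ψ p ∂(π : Measure (X × Y)))
      {π | (π : Measure (X × Y)).map Prod.fst = (μ : Measure X)} := by
    exact continuousOn_integral_selector ha hC (hN n) (hNn n)
  have ht₀ : t < ∫ p, ψ p ∂(π₀ : Measure (X × Y)) := by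
    rw [← EReal.coe_lt_coe_iff, ← heint h₀]
    simpa only [hψint] using hn
  filter_upwards [(hcont π₀ h₀.map_fst).eventually_const_lt ht₀] with π hπ κ hκ
  calc (t : EReal) < ((∫ p, ψ p ∂(π : Measure (X × Y)) : ℝ) : EReal) := EReal.coe_lt_coe_iff.2 hπ
    _ = eint (μ : Measure X) (fun x => ((∫ y, ψ (x, y) ∂(κ x : Measure Y) : ℝ) : EReal)) :=
      (heint hκ).symm
    _ ≤ eint (μ : Measure X) fun x => c x (κ x) := eint_mono fun x => by
      rw [hψint, hrep]
      exact le_iSup (fun k => ((∫ y, g k y ∂(κ x : Measure Y) - a k x : ℝ) : EReal)) (N n x)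

end

section

variable {X Y : Type*} [MeasurableSpace X] [MeasurableSpace Y]
  {c : X → ProbabilityMeasure Y → EReal} {μ : ProbabilityMeasure X}

theorem exists_isCoupling (μ : ProbabilityMeasure X) (ν : ProbabilityMeasure Y) :
    ∃ π, IsCoupling π μ ν :=
  ⟨μ.prod ν, congrArg ProbabilityMeasure.toMeasure (ProbabilityMeasure.map_fst_prod μ ν),
    congrArg ProbabilityMeasure.toMeasure (ProbabilityMeasure.map_snd_prod μ ν)⟩

theorem IsDisintegration.weakTransport_le {ν : ProbabilityMeasure Y}
    {π : ProbabilityMeasure (X × Y)} {κ : X → ProbabilityMeasure Y} (h : IsDisintegration π μ κ)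
    (hν : (π : Measure (X × Y)).map Prod.snd = (ν : Measure Y)) :
    weakTransport c μ ν ≤ eint (μ : Measure X) fun x => c x (κ x) :=
  (iInf₂_le π ⟨h.map_fst, hν⟩).trans (iInf₂_le κ h)

theorem measurable_mixProb {κ₁ κ₂ : X → ProbabilityMeasure Y}
    (h₁ : Measurable fun x => (κ₁ x : Measure Y)) (h₂ : Measurable fun x => (κ₂ x : Measure Y))
    {a b : ℝ≥0} (hab : a + b = 1) :
    Measurable fun x => (mixProb (κ₁ x) (κ₂ x) a b hab : Measure Y) := by
  refine Measure.measurable_of_measurable_coe _ fun s hs => ?_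
  have : ∀ x, (mixProb (κ₁ x) (κ₂ x) a b hab : Measure Y) s =
      (a : ℝ≥0∞) * (κ₁ x : Measure Y) s + (b : ℝ≥0∞) * (κ₂ x : Measure Y) s := fun x => rfl
  simp only [this]
  exact (((Measure.measurable_coe hs).comp h₁).const_mul _).add
    (((Measure.measurable_coe hs).comp h₂).const_mul _)

end

theorem isClosed_setOf_map_snd_eq {X Y : Type*} [MetricSpace X] [MeasurableSpace X]
    [BorelSpace X] [MetricSpace Y] [CompactSpace Y] [MeasurableSpace Y] [BorelSpace Y]
    (ν : ProbabilityMeasure Y) :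
    IsClosed {π : ProbabilityMeasure (X × Y) |
      (π : Measure (X × Y)).map Prod.snd = (ν : Measure Y)} := by
  have h := isClosed_singleton (x := ν).preimage
    (ProbabilityMeasure.continuous_map (continuous_snd (X := X) (Y := Y)))
  convert h using 1
  ext π
  exact ⟨fun h => ProbabilityMeasure.toMeasure_injective h,
    fun h => congrArg ProbabilityMeasure.toMeasure h⟩

section

variable {X Y : Type*} [MetricSpace X] [CompactSpace X] [MeasurableSpace X] [BorelSpace X]
  [MetricSpace Y] [CompactSpace Y] [MeasurableSpace Y] [BorelSpace Y]
  {c : X → ProbabilityMeasure Y → EReal} {m : ℝ} {μ : ProbabilityMeasure X}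

theorem exists_isDisintegration {π : ProbabilityMeasure (X × Y)}
    (hπ : (π : Measure (X × Y)).map Prod.fst = (μ : Measure X)) :
    ∃ κ, IsDisintegration π μ κ := by
  have : Nonempty Y := ⟨(π : Measure (X × Y)).nonempty_of_neZero.some.2⟩
  refine ⟨fun x => ⟨(π : Measure (X × Y)).condKernel x, inferInstance⟩,
    (π : Measure (X × Y)).condKernel.measurable, fun A B hA hB => ?_⟩
  have hfst : (π : Measure (X × Y)).fst = (μ : Measure X) := hπ
  conv_lhs => rw [← (π : Measure (X × Y)).disintegrate (π : Measure (X × Y)).condKernel, hfst]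
  exact Measure.compProd_apply_prod hA hB

theorem IsWeakCost.planCost_eq (hc : IsWeakCost c m) {π : ProbabilityMeasure (X × Y)}
    {κ : X → ProbabilityMeasure Y} (h : IsDisintegration π μ κ) :
    planCost μ c π = eint (μ : Measure X) fun x => c x (κ x) := by
  refine le_antisymm (iInf₂_le κ h) (le_iInf₂ fun κ' h' => le_of_forall_lt fun t' ht' => ?_)
  obtain ⟨t, ht1, ht2⟩ := EReal.lt_iff_exists_real_btwn.1 ht'
  exact ht1.trans ((hc.eventually_lt_eint h ht2).self_of_nhdsWithin h.map_fst κ' h')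

theorem IsWeakCost.lowerSemicontinuousOn_planCost (hc : IsWeakCost c m) :
    LowerSemicontinuousOn (planCost μ c)
      {π : ProbabilityMeasure (X × Y) |
        (π : Measure (X × Y)).map Prod.fst = (μ : Measure X)} := by
  intro π₀ hπ₀ t' ht'
  obtain ⟨κ₀, h₀⟩ := exists_isDisintegration hπ₀
  rw [hc.planCost_eq h₀] at ht'
  obtain ⟨t, ht1, ht2⟩ := EReal.lt_iff_exists_real_btwn.1 ht'
  filter_upwards [hc.eventually_lt_eint h₀ ht2, self_mem_nhdsWithin] with π hπ hfst
  obtain ⟨κ, h⟩ := exists_isDisintegration hfst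
  rw [hc.planCost_eq h]
  exact ht1.trans (hπ κ h)

theorem isClosed_setOf_map_fst_eq (μ : ProbabilityMeasure X) :
    IsClosed {π : ProbabilityMeasure (X × Y) |
      (π : Measure (X × Y)).map Prod.fst = (μ : Measure X)} := by
  have h := isClosed_singleton (x := μ).preimage
    (ProbabilityMeasure.continuous_map (continuous_fst (X := X) (Y := Y)))
  convert h using 1
  ext π
  exact ⟨fun h => ProbabilityMeasure.toMeasure_injective h,
    fun h => congrArg ProbabilityMeasure.toMeasure h⟩

theorem IsWeakCost.exists_isCoupling_eq (hc : IsWeakCost c m) (μ : ProbabilityMeasure X)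
    (ν : ProbabilityMeasure Y) : ∃ π κ, IsCoupling π μ ν ∧ IsDisintegration π μ κ ∧
      weakTransport c μ ν = eint (μ : Measure X) fun x => c x (κ x) := by
  obtain ⟨π, hπ, hmin⟩ := LowerSemicontinuousOn.exists_isMinOn
    (s := {π : ProbabilityMeasure (X × Y) | IsCoupling π μ ν}) (exists_isCoupling μ ν)
    ((isClosed_setOf_map_fst_eq μ).inter (isClosed_setOf_map_snd_eq ν)).isCompact
    (hc.lowerSemicontinuousOn_planCost.mono fun π h => h.1)
  obtain ⟨κ, h⟩ := exists_isDisintegration hπ.1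
  exact ⟨π, κ, hπ, h, (le_antisymm (iInf₂_le π hπ) (le_iInf₂ fun π' h' => hmin h')).trans
    (hc.planCost_eq h)⟩

theorem IsWeakCost.le_weakTransport (hc : IsWeakCost c m) (μ : ProbabilityMeasure X)
    (ν : ProbabilityMeasure Y) : (m : EReal) ≤ weakTransport c μ ν := by
  obtain ⟨π, κ, -, -, h⟩ := hc.exists_isCoupling_eq μ ν
  rw [h]
  exact le_eint fun x => hc.le x _

theorem IsWeakCost.lowerSemicontinuous_weakTransport (hc : IsWeakCost c m)
    (μ : ProbabilityMeasure X) : LowerSemicontinuous (weakTransport c μ) := by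
  refine lowerSemicontinuous_iff_isClosed_preimage.2 fun t => ?_
  obtain ⟨v, hv, hveq⟩ := lowerSemicontinuousOn_iff_preimage_Iic.1
    (hc.lowerSemicontinuousOn_planCost (μ := μ)) t
  have hcl := (isClosed_setOf_map_fst_eq (Y := Y) μ).inter hv
  rw [← hveq] at hcl
  convert (hcl.isCompact.image
    (ProbabilityMeasure.continuous_map (continuous_snd (X := X) (Y := Y)))).isClosed using 1
  ext ν
  refine ⟨fun hν => ?_, ?_⟩
  · obtain ⟨π, κ, hπ, h, heq⟩ := hc.exists_isCoupling_eq μ ν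
    refine ⟨π, ⟨hπ.1, ?_⟩, ProbabilityMeasure.toMeasure_injective hπ.2⟩
    rw [mem_preimage, hc.planCost_eq h, ← heq]
    exact hν
  · rintro ⟨π, ⟨hfst, hle⟩, rfl⟩
    refine (iInf₂_le (f := fun π (_ : IsCoupling π μ _) => planCost μ c π) π
      ⟨hfst, rfl⟩).trans hle

theorem IsWeakCost.convexOnProb_weakTransport (hc : IsWeakCost c m) (μ : ProbabilityMeasure X) :
    ConvexOnProb (weakTransport c μ) := by
  intro ν₁ ν₂ τ a b hab hτ
  obtain ⟨π₁, κ₁, hπ₁, h₁, heq₁⟩ := hc.exists_isCoupling_eq μ ν₁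
  obtain ⟨π₂, κ₂, hπ₂, h₂, heq₂⟩ := hc.exists_isCoupling_eq μ ν₂
  have h := isDisintegration_planOf (μ := μ) (measurable_mixProb h₁.1 h₂.1 hab)
  have hsnd : (planOf μ _ h.1 : Measure (X × Y)).map Prod.snd = (τ : Measure Y) := by
    ext B hB
    have hmix : ∀ x, (mixProb (κ₁ x) (κ₂ x) a b hab : Measure Y) B =
      (a : ℝ≥0∞) * (κ₁ x : Measure Y) B + (b : ℝ≥0∞) * (κ₂ x : Measure Y) B := fun x => rfl
    have hτB : (τ : Measure Y) B =
      (a : ℝ≥0∞) * (ν₁ : Measure Y) B + (b : ℝ≥0∞) * (ν₂ : Measure Y) B := by rw [hτ]; rfl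
    have hm₁ : Measurable fun x => (κ₁ x : Measure Y) B := (Measure.measurable_coe hB).comp h₁.1
    have hm₂ : Measurable fun x => (κ₂ x : Measure Y) B := (Measure.measurable_coe hB).comp h₂.1
    rw [h.map_snd_apply hB, hτB, ← hπ₁.2, ← hπ₂.2, h₁.map_snd_apply hB, h₂.map_snd_apply hB]
    simp only [hmix]
    rw [lintegral_add_left (hm₁.const_mul _), lintegral_const_mul _ hm₁, lintegral_const_mul _ hm₂]
  refine (h.weakTransport_le hsnd).trans ?_
  rw [heq₁, heq₂, ← eint_convex (hc.measurable_comp h₁.1) (hc.measurable_comp h₂.1)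
    (fun x => hc.le x _) (fun x => hc.le x _) hab]
  exact eint_mono fun x => hc.convex x _ _ _ a b hab rfl

/-- The Legendre transform of `weakTransport c μ` is the integral of `costOp c`. -/
theorem IsWeakCost.iSup_sub_weakTransport (hc : IsWeakCost c m) (μ : ProbabilityMeasure X)
    (g : C(Y, ℝ)) :
    (⨆ ν : ProbabilityMeasure Y, ((∫ y, g y ∂(ν : Measure Y) : ℝ) : EReal) - weakTransport c μ ν) =
      eint (μ : Measure X) (costOp c g) := by
  obtain ⟨ξ, hξ, hS, hmin⟩ := hc.exists_argmin g
  have hu : ∀ {κ : X → ProbabilityMeasure Y}, Measurable (fun x => (κ x : Measure Y)) →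
      Measurable (fun x => ∫ y, g y ∂(κ x : Measure Y)) ∧
      Integrable (fun x => ∫ y, g y ∂(κ x : Measure Y)) (μ : Measure X) := fun {κ} hκ => by
    have := measurable_integral_prob hκ (g.continuous.measurable.comp measurable_snd)
    exact ⟨this, integrable_of_forall_norm_le this fun x => abs_integral_le_norm g (κ x)⟩
  have hsplit : ∀ {κ : X → ProbabilityMeasure Y}, Measurable (fun x => (κ x : Measure Y)) →
      eint (μ : Measure X) (fun x => c x (κ x) + ((-∫ y, g y ∂(κ x : Measure Y) : ℝ) : EReal)) =
      eint (μ : Measure X) (fun x => c x (κ x)) +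
        ((-∫ x, ∫ y, g y ∂(κ x : Measure Y) ∂(μ : Measure X) : ℝ) : EReal) := fun {κ} hκ => by
    have := eint_add_coe (u := fun x => -∫ y, g y ∂(κ x : Measure Y)) (hc.measurable_comp hκ)
      (fun x => hc.le x _) (hu hκ).1.neg (hu hκ).2.neg
    rwa [integral_neg] at this
  have hrhs : eint (μ : Measure X) (costOp c g) = -eint (μ : Measure X)
      (fun x => c x (ξ x) + ((-∫ y, g y ∂(ξ x : Measure Y) : ℝ) : EReal)) := by
    rw [← eint_neg (m := m - ‖g‖)]
    · exact congrArg _ (funext fun x => costOp_eq_neg (hmin x))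
    · intro x
      rw [sub_eq_add_neg, EReal.coe_add]
      exact add_le_add (hc.le _ _) (EReal.coe_le_coe_iff.2
        (neg_le_neg ((le_abs_self _).trans (abs_integral_le_norm _ _))))
  simp only [EReal.coe_sub_eq_neg_add]
  rw [hrhs]
  refine le_antisymm (iSup_le fun ν => EReal.neg_le_neg_iff.2 ?_) ?_
  · obtain ⟨π, κ, hπ, h, heq⟩ := hc.exists_isCoupling_eq μ ν
    rw [heq, h.integral_snd_eq hπ.2 g.continuous.measurable (integrable_continuousMap_s18 g _),
      ← hsplit h.1]
    exact eint_mono fun x => hmin x _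
  · have h := isDisintegration_planOf (μ := μ) hξ
    set ν : ProbabilityMeasure Y := (planOf μ ξ hξ).map measurable_snd.aemeasurable with hν
    refine le_trans (EReal.neg_le_neg_iff.2 ?_) (le_iSup (fun ν : ProbabilityMeasure Y =>
      -(weakTransport c μ ν + ((-∫ y, g y ∂(ν : Measure Y) : ℝ) : EReal))) ν)
    rw [hsplit hξ, h.integral_snd_eq (ν := ν) rfl g.continuous.measurable
      (integrable_continuousMap_s18 g _)]
    exact add_le_add_left (h.weakTransport_le rfl) _

end

/-- A convex lower semicontinuous functional is dominated by any functional with a smaller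
Legendre transform. -/
theorem le_of_forall_iSup_sub_le {Y : Type*} [MetricSpace Y] [CompactSpace Y] [MeasurableSpace Y]
    [BorelSpace Y] {f₁ f₂ : ProbabilityMeasure Y → EReal} {m : ℝ} (hconv : ConvexOnProb f₂)
    (hlsc : LowerSemicontinuous f₂) (hm : ∀ σ, (m : EReal) ≤ f₂ σ)
    (h : ∀ g : C(Y, ℝ), (⨆ σ : ProbabilityMeasure Y,
        ((∫ y, g y ∂(σ : Measure Y) : ℝ) : EReal) - f₁ σ) ≤
      ⨆ σ : ProbabilityMeasure Y, ((∫ y, g y ∂(σ : Measure Y) : ℝ) : EReal) - f₂ σ)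
    (ν : ProbabilityMeasure Y) : f₂ ν ≤ f₁ ν := by
  by_contra! hlt
  obtain ⟨t, ht1, ht2⟩ := EReal.lt_iff_exists_real_btwn.1 hlt
  obtain ⟨g, hg, htg⟩ := exists_integral_le_of_lt hconv hlsc hm ht2
  have h1 : (⨆ σ : ProbabilityMeasure Y, ((∫ y, g y ∂(σ : Measure Y) : ℝ) : EReal) - f₂ σ) ≤ 0 :=
    iSup_le fun σ => EReal.sub_nonpos.2 (hg σ)
  have h2 : 0 < ((∫ y, g y ∂(ν : Measure Y) : ℝ) : EReal) - f₁ ν :=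
    EReal.sub_pos.2 (ht1.trans_le (EReal.coe_le_coe_iff.2 htg))
  exact (h2.trans_le ((le_iSup (fun σ : ProbabilityMeasure Y =>
    ((∫ y, g y ∂(σ : Measure Y) : ℝ) : EReal) - f₁ σ) ν).trans ((h g).trans h1))).false

theorem continuous_diracP {X : Type*} [TopologicalSpace X] [MeasurableSpace X]
    [OpensMeasurableSpace X] : Continuous (diracP : X → ProbabilityMeasure X) :=
  continuous_diracProba

/-- **Representation of backward linear transfers as optimal weak transports.**
(i) The optimal weak transport associated to a convex lower semicontinuous cost
is a backward linear transfer whose Kantorovich operator is `T⁻`;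
(ii) conversely, every standard backward linear transfer is the optimal weak
transport for the cost `c(x,σ) = 𝒯(δ_x,σ)`, with an attained optimal plan. -/
theorem blt_eq_weakTransport
    {X Y : Type*} [MetricSpace X] [CompactSpace X] [MeasurableSpace X] [BorelSpace X]
    [MetricSpace Y] [CompactSpace Y] [MeasurableSpace Y] [BorelSpace Y] :
    (∀ c : X → ProbabilityMeasure Y → EReal,
      (∀ x σ, c x σ ≠ ⊥) →
      (∃ m : ℝ, ∀ x σ, (m : EReal) ≤ c x σ) →
      (∀ x, ∃ σ, c x σ ≠ ⊤) →
      LowerSemicontinuous (fun p : X × ProbabilityMeasure Y => c p.1 p.2) →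
      (∀ (x : X) (σ₁ σ₂ τ : ProbabilityMeasure Y) (a b : ℝ≥0), a + b = 1 →
        (τ : Measure Y) = a • (σ₁ : Measure Y) + b • (σ₂ : Measure Y) →
        c x τ ≤ ((a : ℝ) : EReal) * c x σ₁ + ((b : ℝ) : EReal) * c x σ₂) →
      ∀ (μ : ProbabilityMeasure X) (g : C(Y, ℝ)),
        (⨆ ν : ProbabilityMeasure Y,
          (((∫ y, g y ∂(ν : Measure Y)) : ℝ) : EReal) - weakTransport c μ ν)
          = eint (μ : Measure X) (costOp c g)) ∧
    (∀ 𝒯 : ProbabilityMeasure X → ProbabilityMeasure Y → EReal,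
      IsBLT 𝒯 → IsStandardT 𝒯 →
      (∀ (μ : ProbabilityMeasure X) (ν : ProbabilityMeasure Y),
        𝒯 μ ν = weakTransport (fun x σ => 𝒯 (diracP x) σ) μ ν) ∧
      (∀ (μ : ProbabilityMeasure X) (ν : ProbabilityMeasure Y), 𝒯 μ ν ≠ ⊤ →
        ∃ (π : ProbabilityMeasure (X × Y)) (κ : X → ProbabilityMeasure Y),
          IsCoupling π μ ν ∧ IsDisintegration π μ κ ∧
          (∀ᵐ x ∂(μ : Measure X), 𝒯 (diracP x) (κ x) ≠ ⊤) ∧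
          𝒯 μ ν = eint (μ : Measure X) (fun x => 𝒯 (diracP x) (κ x)))) := by
  refine ⟨fun c _ ⟨m, hm⟩ hp hl hcv μ g => IsWeakCost.iSup_sub_weakTransport
    ⟨hm, hp, hl, hcv⟩ μ g, fun 𝒯 ⟨_, _, ⟨m, hm⟩, hconv, hlsc, hleg⟩ hst => ?_⟩
  have hself : ∀ (μ : ProbabilityMeasure X) (a b : ℝ≥0), a + b = 1 →
      (μ : Measure X) = a • (μ : Measure X) + b • (μ : Measure X) := fun μ a b hab => by
    rw [← add_smul, hab, one_smul]
  have hc : IsWeakCost (fun x σ => 𝒯 (diracP x) σ) m :=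
    ⟨fun x σ => hm _ _, hst,
      hlsc.comp ((continuous_diracP.comp continuous_fst).prodMk continuous_snd),
      fun x σ₁ σ₂ τ a b hab hτ => hconv _ _ _ _ _ _ a b hab (hself _ a b hab) hτ⟩
  have heq : ∀ (μ : ProbabilityMeasure X) (ν : ProbabilityMeasure Y),
      𝒯 μ ν = weakTransport (fun x σ => 𝒯 (diracP x) σ) μ ν := fun μ ν => by
    have hsup := fun g => (hleg μ g).trans (hc.iSup_sub_weakTransport μ g).symm
    exact le_antisymm
      (le_of_forall_iSup_sub_le
        (fun σ₁ σ₂ τ a b hab hτ => hconv _ _ _ _ _ _ a b hab (hself _ a b hab) hτ)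
        (hlsc.comp (Continuous.prodMk_right μ)) (hm μ) (fun g => (hsup g).ge) ν)
      (le_of_forall_iSup_sub_le (hc.convexOnProb_weakTransport μ)
        (hc.lowerSemicontinuous_weakTransport μ) (hc.le_weakTransport μ)
        (fun g => (hsup g).le) ν)
  refine ⟨heq, fun μ ν hfin => ?_⟩
  obtain ⟨π, κ, hπ, h, hW⟩ := hc.exists_isCoupling_eq μ ν
  rw [heq, hW] at hfin
  exact ⟨π, κ, hπ, h, ae_ne_top_of_eint_ne_top (hc.measurable_comp h.1) (fun x => hc.le x _) hfin,
    (heq μ ν).trans hW⟩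
end
end
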